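/- arXiv:1502.05127 — 3 statements merged into one kernel-verified Lean document; each statement's English description precedes it below -/
import Mathlib

section
/- For each α with 0 ≤ α < 1, the function h_α(z) = k_α(z)/z (with h_α(0) = 1) is injective on the open unit disk 𝔻 and its image h_α(𝔻) is a convex subset of ℂ; moreover Re(1 + z·h_α''(z)/h_α'(z)) > 0 for all z ∈ 𝔻. -/
/-- The unit disk `{z : ℂ | |z| < 1}`. -/
noncomputable def unitDisk : Set ℂ := Metric.ball 0 1

/-- The extremal convex function of order `α`:
`k_α(z) = ((1-z)^(2α-1) - 1)/(1-2α)` (so that `k_α(0)=0`, `k_α'(0)=1`),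
with `k_{1/2}(z) = -log(1-z)` (principal branches). -/
noncomputable def kfun (α : ℝ) (z : ℂ) : ℂ :=
  if α = 1 / 2 then -Complex.log (1 - z)
  else ((1 - z) ^ ((2 * α - 1 : ℝ) : ℂ) - 1) / ((1 - 2 * α : ℝ) : ℂ)

/-- `h_α(z) = k_α(z)/z` for `z ≠ 0`, `h_α(0) = 1`. -/
noncomputable def hfun (α : ℝ) (z : ℂ) : ℂ :=
  if z = 0 then 1 else kfun α z / z

/-- `f ∈ K(α)`: `f` is analytic on the unit disk, normalized by `f(0)=0`, `f'(0)=1`,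
with nonvanishing derivative and `Re(1 + z f''(z)/f'(z)) > α` on the disk. -/
def IsConvexOfOrder (α : ℝ) (f : ℂ → ℂ) : Prop :=
  DifferentiableOn ℂ f unitDisk ∧ f 0 = 0 ∧ deriv f 0 = 1 ∧
    ∀ z ∈ unitDisk, deriv f z ≠ 0 ∧
      α < (1 + z * deriv (deriv f) z / deriv f z).re

/-!
Suppose `Re (1 + (z - c) f'' / f') > 0` on a disk about `c`. The tangent vector of the image of a
circle about `c` then turns monotonically, and through exactly `2π` since `log f'` is single-valued,
so the image curve stays on one side of each of its tangent lines. By the maximum principle so does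
the image of the disk bounded by the circle: this gives injectivity, and a support line at each
boundary point of the image, hence convexity.

For `f = h_α`, the equation `z h_α = k_α` leads to `1 + z h_α'' / h_α' = (1 + w) / (1 - w)` with
`w = ((3 - 2α) / 3) z ₂F₁(2α, 1; 4; z)`. The Taylor coefficients of `w` are nonnegative and sum to
at most `1` by telescoping, so `|w| < 1` and `(1 + w) / (1 - w)` has positive real part.
-/

open Complex Metric

section Convexity

theorem inter_frontier_nonempty_of_isPreconnected {X : Type*} [TopologicalSpace X] {s t : Set X}
    (hs : IsPreconnected s) (hst : (s ∩ t).Nonempty) (hst' : (s ∩ tᶜ).Nonempty) :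
    (s ∩ frontier t).Nonempty := by
  by_contra hcon
  have hcover : s ⊆ interior t ∪ interior tᶜ := by
    rw [← compl_frontier_eq_union_interior]
    exact fun x hxs hxt => hcon ⟨x, hxs, hxt⟩
  obtain ⟨x, hxs, hxt⟩ := hst
  obtain ⟨y, hys, hyt⟩ := hst'
  obtain ⟨w, -, hwt, hwt'⟩ := hs _ _ isOpen_interior isOpen_interior hcover
    ⟨x, hxs, (hcover hxs).resolve_right fun h => interior_subset h hxt⟩
    ⟨y, hys, (hcover hys).resolve_left fun h => hyt (interior_subset h)⟩
  exact interior_subset hwt' (interior_subset hwt)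

variable {E : Type*} [AddCommGroup E] [Module ℝ E] [TopologicalSpace E] [ContinuousAdd E]
  [ContinuousSMul ℝ E]

theorem lt_of_mem_interior_of_forall_le {ℓ : StrongDual ℝ E} (hℓ : ℓ ≠ 0) {C : Set E} {M : ℝ}
    (hM : ∀ y ∈ C, ℓ y ≤ M) {x : E} (hx : x ∈ interior C) : ℓ x < M := by
  have himage : ℓ '' interior C ⊆ Set.Iio M := by
    rw [← interior_Iic]
    refine interior_maximal ?_ (ℓ.isOpenMap_of_ne_zero hℓ _ isOpen_interior)
    exact Set.image_subset_iff.2 fun y hy => hM y (interior_subset hy)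
  exact himage (Set.mem_image_of_mem ℓ hx)

theorem convex_of_forall_mem_frontier_exists_support {C : Set E} (hC : IsClosed C)
    (hne : (interior C).Nonempty)
    (hsupp : ∀ x ∈ frontier C, ∃ ℓ : StrongDual ℝ E, ℓ ≠ 0 ∧ ∀ y ∈ C, ℓ y ≤ ℓ x) :
    Convex ℝ C := by
  obtain ⟨o, ho⟩ := hne
  refine convex_iff_segment_subset.2 fun A hA B hB p hp => ?_
  by_contra hpC
  obtain ⟨q, hq, hqC⟩ := inter_frontier_nonempty_of_isPreconnected
    (convex_segment (𝕜 := ℝ) o p).isPreconnected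
    ⟨o, left_mem_segment ℝ o p, interior_subset ho⟩ ⟨p, right_mem_segment ℝ o p, hpC⟩
  obtain ⟨ℓ, hℓ, hle⟩ := hsupp q hqC
  have hoq : ℓ o < ℓ q := lt_of_mem_interior_of_forall_le hℓ hle ho
  have hpq : ℓ p ≤ ℓ q :=
    (convex_halfSpace_le ℓ.isLinear (ℓ q)).segment_subset (hle A hA) (hle B hB) hp
  have hqp : q ≠ p := fun h => hpC (h ▸ hC.frontier_subset hqC)
  have hqo : q ≠ o := fun h => hqC.2 (h ▸ ho)
  obtain ⟨a, b, ha, hb, hab, rfl⟩ := mem_openSegment_of_ne_left_right hqo.symm hqp.symm hq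
  have : ℓ (a • o + b • p) < ℓ (a • o + b • p) :=
    calc ℓ (a • o + b • p) = a * ℓ o + b * ℓ p := by simp
      _ < a * ℓ (a • o + b • p) + b * ℓ (a • o + b • p) :=
        add_lt_add_of_lt_of_le (mul_lt_mul_of_pos_left hoq ha) (mul_le_mul_of_nonneg_left hpq hb.le)
      _ = ℓ (a • o + b • p) := by rw [← add_mul, hab, one_mul]
  exact this.false

end Convexity

theorem re_pos_of_forall_mem_frontier_re_nonneg {U : Set ℂ} (hU : Bornology.IsBounded U)
    (hUo : IsOpen U) (hUc : IsPreconnected U) {g : ℂ → ℂ} (hg : DiffContOnCl ℂ g U)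
    (hnonneg : ∀ z ∈ frontier U, 0 ≤ (g z).re) (hpos : ∃ z ∈ frontier U, 0 < (g z).re)
    {z : ℂ} (hz : z ∈ U) : 0 < (g z).re := by
  -- The maximum modulus principle for `exp (-g)` is the minimum principle for `Re g`.
  have hnorm : ∀ w, ‖exp (-g w)‖ = Real.exp (-(g w).re) := fun w => by rw [norm_exp, neg_re]
  have hF : DiffContOnCl ℂ (fun w => exp (-g w)) U :=
    differentiable_exp.comp_diffContOnCl hg.neg
  have hle : ∀ w ∈ U, ‖exp (-g w)‖ ≤ 1 := fun w hw =>
    norm_le_of_forall_mem_frontier_norm_le hU hF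
      (fun v hv => by simpa [hnorm] using hnonneg v hv) (subset_closure hw)
  by_contra! hzle
  have hmax : IsMaxOn (norm ∘ fun w => exp (-g w)) U z := fun w hw =>
    (hle w hw).trans (by simpa [hnorm] using hzle)
  obtain ⟨v, hv, hvpos⟩ := hpos
  have heq : ‖exp (-g v)‖ = ‖exp (-g z)‖ :=
    norm_eqOn_closure_of_isPreconnected_of_isMaxOn hUc hUo hF hz hmax
      (frontier_subset_closure hv)
  rw [hnorm, hnorm, Real.exp_eq_exp] at heq
  linarith

theorem exists_hasDerivAt_log_of_ne_zero {g : ℂ → ℂ} {c : ℂ} {R : ℝ}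
    (hg : DifferentiableOn ℂ g (ball c R)) (hne : ∀ z ∈ ball c R, g z ≠ 0) :
    ∃ L : ℂ → ℂ, ∀ z ∈ ball c R, HasDerivAt L (deriv g z / g z) z ∧ exp (L z) = g z := by
  obtain ⟨L, hLc, hL⟩ :=
    ((hg.deriv isOpen_ball).div hg hne).isExactOn_ball.with_val_at c (log (g c))
  refine ⟨L, fun z hz => ⟨hL z hz, ?_⟩⟩
  have hquot : ∀ w ∈ ball c R, HasDerivAt (fun w => exp (L w) / g w) 0 w := fun w hw => by
    have hgw := (hg.differentiableAt (isOpen_ball.mem_nhds hw)).hasDerivAt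
    refine ((hL w hw).cexp.div hgw (hne w hw)).congr_deriv ?_
    have := hne w hw
    simp only [Pi.div_apply]
    field_simp
    ring
  have hc : c ∈ ball c R := mem_ball_self (pos_of_mem_ball hz)
  have hconst : exp (L z) / g z = exp (L c) / g c :=
    isOpen_ball.is_const_of_deriv_eq_zero (convex_ball c R).isPreconnected
      (fun w hw => (hquot w hw).differentiableAt.differentiableWithinAt)
      (fun w hw => (hquot w hw).deriv) hz hc
  rwa [hLc, exp_log (hne c hc), div_self (hne c hc), div_eq_one_iff_eq (hne z hz)] at hconst

theorem pos_of_hasDerivAt_mul_sin {a b : ℝ} {Φ ρ σ : ℝ → ℝ} (hΦc : ContinuousOn Φ (Set.Icc a b))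
    (hΦ : ∀ t ∈ Set.Ioo a b, HasDerivAt Φ (ρ t * Real.sin (σ t)) t)
    (hρ : ∀ t ∈ Set.Ioo a b, 0 < ρ t) (hσ : StrictMonoOn σ (Set.Icc a b))
    (hσa : σ a = 0) (hσb : σ b = 2 * Real.pi) (hΦa : Φ a = 0) (hΦb : Φ b = 0)
    {t : ℝ} (ht : t ∈ Set.Ioo a b) : 0 < Φ t := by
  -- `Φ` increases as long as `σ ≤ π` and decreases afterwards.
  have hab : a ≤ b := (ht.1.trans ht.2).le
  have ht' := Set.Ioo_subset_Icc_self ht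
  rcases le_total (σ t) Real.pi with htπ | hπt
  · have hmono : StrictMonoOn Φ (Set.Icc a t) := by
      refine strictMonoOn_of_deriv_pos (convex_Icc a t)
        (hΦc.mono (Set.Icc_subset_Icc_right ht.2.le)) fun s hs => ?_
      rw [interior_Icc] at hs
      have hs' : s ∈ Set.Ioo a b := ⟨hs.1, hs.2.trans ht.2⟩
      have h0 := hσ (Set.left_mem_Icc.2 hab) (Set.Ioo_subset_Icc_self hs') hs.1
      have h1 := hσ (Set.Ioo_subset_Icc_self hs') ht' hs.2
      rw [(hΦ s hs').deriv]
      exact mul_pos (hρ s hs') (Real.sin_pos_of_pos_of_lt_pi (by linarith) (by linarith))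
    simpa [hΦa] using hmono (Set.left_mem_Icc.2 ht.1.le) (Set.right_mem_Icc.2 ht.1.le) ht.1
  · have hanti : StrictAntiOn Φ (Set.Icc t b) := by
      refine strictAntiOn_of_deriv_neg (convex_Icc t b)
        (hΦc.mono (Set.Icc_subset_Icc_left ht.1.le)) fun s hs => ?_
      rw [interior_Icc] at hs
      have hs' : s ∈ Set.Ioo a b := ⟨ht.1.trans hs.1, hs.2⟩
      have h0 := hσ ht' (Set.Ioo_subset_Icc_self hs') hs.1
      have h1 := hσ (Set.Ioo_subset_Icc_self hs') (Set.right_mem_Icc.2 hab) hs.2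
      rw [(hΦ s hs').deriv, ← Real.sin_sub_two_pi]
      exact mul_neg_of_pos_of_neg (hρ s hs')
        (Real.sin_neg_of_neg_of_neg_pi_lt (by linarith) (by linarith))
    simpa [hΦb] using hanti (Set.left_mem_Icc.2 ht.2.le) (Set.right_mem_Icc.2 ht.2.le) ht.2

theorem circleMap_mem_ball {c : ℂ} {r R : ℝ} (hr : 0 ≤ r) (hrR : r < R) (s : ℝ) :
    circleMap c r s ∈ ball c R :=
  closedBall_subset_ball hrR (circleMap_mem_closedBall c hr s)

theorem circleMap_zero_eq_mul_exp (r θ s : ℝ) :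
    circleMap 0 r s = circleMap 0 r θ * exp ((s - θ) * I) := by
  rw [circleMap_zero, circleMap_zero, mul_assoc, ← exp_add]
  ring_nf

/-- Study's analytic condition for convexity: as `z` runs counterclockwise through a circle about
`c` inside `ball c R`, the image curve `f z` has positive curvature, that is, its tangent vector
`I * (z - c) * deriv f z` turns counterclockwise, with angular speed
`Re (1 + (z - c) * f''(z) / f'(z))`. -/
structure HasPosCurvatureOnCircles (f : ℂ → ℂ) (c : ℂ) (R : ℝ) : Prop where
  differentiableOn : DifferentiableOn ℂ f (ball c R)
  deriv_ne_zero : ∀ z ∈ ball c R, deriv f z ≠ 0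
  re_pos : ∀ z ∈ ball c R, 0 < (1 + (z - c) * deriv (deriv f) z / deriv f z).re

namespace HasPosCurvatureOnCircles

variable {f : ℂ → ℂ} {c : ℂ} {r R : ℝ}

theorem exists_log_tangent (hf : HasPosCurvatureOnCircles f c R) (hr : 0 < r) (hrR : r < R)
    (θ : ℝ) : ∃ A : ℝ → ℂ, A θ = 0 ∧ A (θ + 2 * Real.pi) = 2 * Real.pi * I ∧
      (∀ s, HasDerivAt A (I * (1 + (circleMap c r s - c) * deriv (deriv f) (circleMap c r s) /
        deriv f (circleMap c r s))) s) ∧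
      ∀ s, exp (A s) = circleMap 0 r s * deriv f (circleMap c r s) /
        (circleMap 0 r θ * deriv f (circleMap c r θ)) := by
  obtain ⟨L, hL⟩ := exists_hasDerivAt_log_of_ne_zero (hf.differentiableOn.deriv isOpen_ball)
    hf.deriv_ne_zero
  have hmem := circleMap_mem_ball (c := c) hr.le hrR
  refine ⟨fun s => (s - θ) * I + (L (circleMap c r s) - L (circleMap c r θ)), by simp, ?_,
    fun s => ?_, fun s => ?_⟩
  · simp [periodic_circleMap c r θ]
  · have hlin : HasDerivAt (fun s : ℝ => ((s : ℂ) - θ) * I) I s := by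
      simpa using ((hasDerivAt_id s).ofReal_comp.sub_const (θ : ℂ)).mul_const I
    have hlog := (hL _ (hmem s)).1.comp s (hasDerivAt_circleMap c r s)
    refine (hlin.add (hlog.sub_const _)).congr_deriv ?_
    rw [circleMap_sub_center]
    ring
  · have hθ : circleMap 0 r θ ≠ 0 := circleMap_ne_center hr.ne'
    rw [exp_add, exp_sub, (hL _ (hmem s)).2, (hL _ (hmem θ)).2, circleMap_zero_eq_mul_exp r θ s]
    field_simp

theorem re_div_pos_of_mem_Ioo (hf : HasPosCurvatureOnCircles f c R) (hr : 0 < r) (hrR : r < R)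
    {θ s : ℝ} (hs : s ∈ Set.Ioo θ (θ + 2 * Real.pi)) :
    0 < ((f (circleMap c r θ) - f (circleMap c r s)) /
      ((circleMap c r θ - c) * deriv f (circleMap c r θ))).re := by
  obtain ⟨A, hAθ, hAθ', hA, hexp⟩ := hf.exists_log_tangent hr hrR θ
  have hmem := circleMap_mem_ball (c := c) hr.le hrR
  have hσ : StrictMono fun s => (A s).im := by
    refine strictMono_of_deriv_pos fun s => ?_
    have hIm : HasDerivAt (fun s => (A s).im) _ s := imCLM.hasFDerivAt.comp_hasDerivAt s (hA s)
    rw [hIm.deriv]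
    simpa using hf.re_pos _ (hmem s)
  set T := (circleMap c r θ - c) * deriv f (circleMap c r θ) with hT
  have hΦ : ∀ s, HasDerivAt (fun s => ((f (circleMap c r θ) - f (circleMap c r s)) / T).re)
      (Real.exp (A s).re * Real.sin (A s).im) s := fun s => by
    have hcomp := (hf.differentiableOn.differentiableAt
      (isOpen_ball.mem_nhds (hmem s))).hasDerivAt.comp s (hasDerivAt_circleMap c r s)
    refine (reCLM.hasFDerivAt.comp_hasDerivAt s
      ((hcomp.const_sub (f (circleMap c r θ))).div_const T)).congr_deriv ?_
    have hrot : -(deriv f (circleMap c r s) * (circleMap 0 r s * I)) / T = -(exp (A s) * I) := by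
      rw [hexp, hT, circleMap_sub_center]
      ring
    rw [hrot, ← exp_im, reCLM_apply, neg_re, mul_I_re, neg_neg]
  exact pos_of_hasDerivAt_mul_sin (fun s _ => (hΦ s).continuousAt.continuousWithinAt)
    (fun s _ => hΦ s) (fun s _ => Real.exp_pos _) (hσ.strictMonoOn _) (by simp [hAθ])
    (by simp [hAθ']) (by simp) (by simp [periodic_circleMap c r θ]) hs

theorem re_div_pos_of_mem_sphere (hf : HasPosCurvatureOnCircles f c R) {ζ w : ℂ}
    (hζ : ζ ∈ ball c R) (hw : dist w c = dist ζ c) (hne : w ≠ ζ) :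
    0 < ((f ζ - f w) / ((ζ - c) * deriv f ζ)).re := by
  have hr : 0 < dist ζ c := dist_nonneg.lt_of_ne fun h =>
    hne ((dist_eq_zero.1 (hw.trans h.symm)).trans (dist_eq_zero.1 h.symm).symm)
  have hrange : Set.range (circleMap c (dist ζ c)) = sphere c (dist ζ c) := by
    rw [range_circleMap, abs_of_pos hr]
  obtain ⟨θ, hθ⟩ := hrange.symm.subset (mem_sphere.2 (rfl : dist ζ c = dist ζ c))
  obtain ⟨t, ht⟩ := hrange.symm.subset (mem_sphere.2 hw)
  obtain ⟨s, hs, hst⟩ := (periodic_circleMap c (dist ζ c)).exists_mem_Ico Real.two_pi_pos t θ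
  have hsθ : s ≠ θ := by
    rintro rfl
    exact hne (ht.symm.trans (hst.trans hθ))
  have hpos := hf.re_div_pos_of_mem_Ioo hr hζ ⟨hs.1.lt_of_ne' hsθ, hs.2⟩
  rwa [← hst, ht, hθ] at hpos

theorem re_div_pos_of_dist_le (hf : HasPosCurvatureOnCircles f c R) {ζ z : ℂ}
    (hζ : ζ ∈ ball c R) (hz : dist z c ≤ dist ζ c) (hne : z ≠ ζ) :
    0 < ((f ζ - f z) / ((ζ - c) * deriv f ζ)).re := by
  rcases hz.eq_or_lt with heq | hlt
  · exact hf.re_div_pos_of_mem_sphere hζ heq hne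
  have hr : dist ζ c ≠ 0 := (dist_nonneg.trans_lt hlt).ne'
  have hdiff : DifferentiableOn ℂ f (closure (ball c (dist ζ c))) := by
    rw [closure_ball c hr]
    exact hf.differentiableOn.mono (closedBall_subset_ball hζ)
  have hfrontier : frontier (ball c (dist ζ c)) = sphere c (dist ζ c) := frontier_ball c hr
  refine re_pos_of_forall_mem_frontier_re_nonneg
    (g := fun w => (f ζ - f w) / ((ζ - c) * deriv f ζ)) isBounded_ball isOpen_ball
    (convex_ball c (dist ζ c)).isPreconnected ((hdiff.const_sub (f ζ)).div_const _).diffContOnCl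
    ?_ ?_ (mem_ball.2 hlt)
  · intro w hw
    rcases eq_or_ne w ζ with rfl | hwζ
    · simp
    · exact (hf.re_div_pos_of_mem_sphere hζ (mem_sphere.1 (hfrontier ▸ hw)) hwζ).le
  · have hanti : dist (2 * c - ζ) c = dist ζ c := by
      rw [dist_comm ζ, dist_eq, dist_eq]
      ring_nf
    refine ⟨2 * c - ζ, hfrontier ▸ hanti, hf.re_div_pos_of_mem_sphere hζ hanti fun h => hr ?_⟩
    rw [dist_eq_zero]
    linear_combination -h / 2

theorem injOn (hf : HasPosCurvatureOnCircles f c R) : Set.InjOn f (ball c R) := by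
  intro z hz w hw hzw
  by_contra hne
  rcases le_total (dist z c) (dist w c) with h | h
  · simpa [hzw] using hf.re_div_pos_of_dist_le hw h hne
  · simpa [hzw] using hf.re_div_pos_of_dist_le hz h (Ne.symm hne)

theorem image_ball_subset_interior (hf : HasPosCurvatureOnCircles f c R) (hrR : r < R) :
    f '' ball c r ⊆ interior (f '' closedBall c r) := by
  rintro _ ⟨q, hq, rfl⟩
  have hqR : q ∈ ball c R := ball_subset_ball hrR.le hq
  have hstrict : HasStrictDerivAt f (deriv f q) q :=
    (hf.differentiableOn.analyticAt (isOpen_ball.mem_nhds hqR)).hasStrictDerivAt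
  rw [mem_interior_iff_mem_nhds, ← hstrict.map_nhds_eq (hf.deriv_ne_zero q hqR)]
  exact Filter.image_mem_map (mem_nhds_iff.2 ⟨_, ball_subset_closedBall, isOpen_ball, hq⟩)

theorem convex_image_closedBall (hf : HasPosCurvatureOnCircles f c R) (hr : 0 < r)
    (hrR : r < R) : Convex ℝ (f '' closedBall c r) := by
  have hsub : closedBall c r ⊆ ball c R := closedBall_subset_ball hrR
  have hclosed : IsClosed (f '' closedBall c r) :=
    ((isCompact_closedBall c r).image_of_continuousOn
      (hf.differentiableOn.continuousOn.mono hsub)).isClosed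
  have hint := hf.image_ball_subset_interior hrR
  refine convex_of_forall_mem_frontier_exists_support hclosed
    ⟨f c, hint (Set.mem_image_of_mem f (mem_ball_self hr))⟩ fun x hx => ?_
  obtain ⟨q, hq, rfl⟩ := hclosed.frontier_subset hx
  have hqr : dist q c = r :=
    (mem_closedBall.1 hq).eq_of_not_lt fun h => hx.2 (hint (Set.mem_image_of_mem f h))
  set T := (q - c) * deriv f q with hT
  have hT0 : T ≠ 0 := mul_ne_zero (sub_ne_zero.2 (dist_pos.1 (hqr ▸ hr)))
    (hf.deriv_ne_zero q (hsub hq))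
  refine ⟨reCLM ∘L ContinuousLinearMap.mul ℝ ℂ T⁻¹, fun h => ?_, ?_⟩
  · simpa [hT0] using congr($h T)
  · rintro _ ⟨w, hw, rfl⟩
    rcases eq_or_ne w q with rfl | hwq
    · exact le_rfl
    have hpos := hf.re_div_pos_of_dist_le (hsub hq) ((mem_closedBall.1 hw).trans_eq hqr.symm) hwq
    rw [← hT, sub_div, sub_re, sub_pos, div_eq_inv_mul, div_eq_inv_mul] at hpos
    exact hpos.le

theorem convex_image_ball (hf : HasPosCurvatureOnCircles f c R) : Convex ℝ (f '' ball c R) := by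
  rw [convex_iff_segment_subset]
  rintro _ ⟨z, hz, rfl⟩ _ ⟨w, hw, rfl⟩
  obtain ⟨r, hr, hrR⟩ := exists_between (max_lt (mem_ball.1 hz) (mem_ball.1 hw))
  obtain ⟨hzr, hwr⟩ := max_lt_iff.1 hr
  exact ((hf.convex_image_closedBall (dist_nonneg.trans_lt hzr) hrR).segment_subset
    (Set.mem_image_of_mem f hzr.le) (Set.mem_image_of_mem f hwr.le)).trans
    (Set.image_mono (closedBall_subset_ball hrR))

end HasPosCurvatureOnCircles

/-- The Taylor coefficients `(3 - 2α) / (n + 3) * (2α)ₙ / (3)ₙ` of the Schwarz function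
`((3 - 2α) / 3) * z * ₂F₁(2α, 1; 4; z)`; the coefficient of index `n` is that of `z ^ (n + 1)`. -/
noncomputable def schwarzCoeff (α : ℝ) (n : ℕ) : ℝ :=
  (3 - 2 * α) / (n + 3) * ∏ i ∈ Finset.range n, (i + 2 * α) / (i + 3)

/-- The Schwarz function `((3 - 2α) / 3) * z * ₂F₁(2α, 1; 4; z)` through which `h_α` satisfies
`1 + z * h_α'' / h_α' = (1 + w) / (1 - w)`. -/
noncomputable def schwarzFun (α : ℝ) (z : ℂ) : ℂ :=
  ∑' n : ℕ, (schwarzCoeff α n : ℂ) * z ^ (n + 1)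

section SchwarzFun

variable {α : ℝ} {z : ℂ}

theorem schwarzCoeff_zero (α : ℝ) : schwarzCoeff α 0 = (3 - 2 * α) / 3 := by simp [schwarzCoeff]

theorem schwarzCoeff_succ (α : ℝ) (n : ℕ) :
    (n + 4) * schwarzCoeff α (n + 1) = (n + 2 * α) * schwarzCoeff α n := by
  rw [schwarzCoeff, schwarzCoeff, Finset.prod_range_succ]
  push_cast
  have h3 : (n : ℝ) + 3 ≠ 0 := by positivity
  have h4 : (n : ℝ) + 1 + 3 ≠ 0 := by positivity
  field_simp
  ring

theorem schwarzCoeff_nonneg (hα0 : 0 ≤ α) (hα : α ≤ 3 / 2) (n : ℕ) : 0 ≤ schwarzCoeff α n :=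
  mul_nonneg (div_nonneg (by linarith) (by positivity)) (by positivity)

theorem sum_range_schwarzCoeff (α : ℝ) (N : ℕ) :
    ∑ n ∈ Finset.range N, schwarzCoeff α n =
      1 - ∏ i ∈ Finset.range N, (i + 2 * α) / ((i : ℝ) + 3) := by
  induction N with
  | zero => simp
  | succ N ih =>
    have h3 : (N : ℝ) + 3 ≠ 0 := by positivity
    rw [Finset.sum_range_succ, ih, Finset.prod_range_succ, schwarzCoeff]
    field_simp
    ring

theorem sum_range_schwarzCoeff_le_one (hα0 : 0 ≤ α) (N : ℕ) :
    ∑ n ∈ Finset.range N, schwarzCoeff α n ≤ 1 := by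
  rw [sum_range_schwarzCoeff]
  exact sub_le_self 1 (by positivity)

theorem summable_schwarzCoeff (hα0 : 0 ≤ α) (hα : α ≤ 3 / 2) : Summable (schwarzCoeff α) :=
  summable_of_sum_range_le (schwarzCoeff_nonneg hα0 hα) (sum_range_schwarzCoeff_le_one hα0)

theorem norm_schwarzCoeff_mul_pow_le (hα0 : 0 ≤ α) (hα : α ≤ 3 / 2) (hz : z ∈ ball (0 : ℂ) 1)
    (n : ℕ) : ‖(schwarzCoeff α n : ℂ) * z ^ (n + 1)‖ ≤ schwarzCoeff α n * ‖z‖ := by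
  rw [norm_mul, norm_real, Real.norm_of_nonneg (schwarzCoeff_nonneg hα0 hα n), norm_pow]
  exact mul_le_mul_of_nonneg_left
    (pow_le_of_le_one (norm_nonneg z) (mem_ball_zero_iff.1 hz).le n.succ_ne_zero)
    (schwarzCoeff_nonneg hα0 hα n)

theorem norm_schwarzCoeff_mul_pow_le_schwarzCoeff (hα0 : 0 ≤ α) (hα : α ≤ 3 / 2) (n : ℕ) (z : ℂ)
    (hz : z ∈ ball (0 : ℂ) 1) : ‖(schwarzCoeff α n : ℂ) * z ^ (n + 1)‖ ≤ schwarzCoeff α n :=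
  (norm_schwarzCoeff_mul_pow_le hα0 hα hz n).trans
    (mul_le_of_le_one_right (schwarzCoeff_nonneg hα0 hα n) (mem_ball_zero_iff.1 hz).le)

theorem hasSum_schwarzFun (hα0 : 0 ≤ α) (hα : α ≤ 3 / 2) (hz : z ∈ ball (0 : ℂ) 1) :
    HasSum (fun n : ℕ => (schwarzCoeff α n : ℂ) * z ^ (n + 1)) (schwarzFun α z) :=
  (Summable.of_norm_bounded (summable_schwarzCoeff hα0 hα) fun n =>
    norm_schwarzCoeff_mul_pow_le_schwarzCoeff hα0 hα n z hz).hasSum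

theorem norm_schwarzFun_lt_one (hα0 : 0 ≤ α) (hα : α ≤ 3 / 2) (hz : z ∈ ball (0 : ℂ) 1) :
    ‖schwarzFun α z‖ < 1 :=
  calc ‖schwarzFun α z‖ ≤ (∑' n, schwarzCoeff α n) * ‖z‖ :=
        (hasSum_schwarzFun hα0 hα hz).norm_le_of_bounded
          ((summable_schwarzCoeff hα0 hα).hasSum.mul_right ‖z‖)
          (norm_schwarzCoeff_mul_pow_le hα0 hα hz)
    _ ≤ ‖z‖ := mul_le_of_le_one_left (norm_nonneg z)
        (Real.tsum_le_of_sum_range_le (schwarzCoeff_nonneg hα0 hα)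
          (sum_range_schwarzCoeff_le_one hα0))
    _ < 1 := mem_ball_zero_iff.1 hz

theorem schwarzFun_ne_one (hα0 : 0 ≤ α) (hα : α ≤ 3 / 2) (hz : z ∈ ball (0 : ℂ) 1) :
    schwarzFun α z ≠ 1 := fun h => by
  simpa [h] using norm_schwarzFun_lt_one hα0 hα hz

theorem differentiableAt_schwarzFun (hα0 : 0 ≤ α) (hα : α ≤ 3 / 2) (hz : z ∈ ball (0 : ℂ) 1) :
    DifferentiableAt ℂ (schwarzFun α) z :=
  (differentiableOn_tsum_of_summable_norm (summable_schwarzCoeff hα0 hα) (fun n => by fun_prop)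
    isOpen_ball (norm_schwarzCoeff_mul_pow_le_schwarzCoeff hα0 hα)).differentiableAt
    (isOpen_ball.mem_nhds hz)

theorem hasSum_mul_deriv_schwarzFun (hα0 : 0 ≤ α) (hα : α ≤ 3 / 2) (hz : z ∈ ball (0 : ℂ) 1) :
    HasSum (fun n : ℕ => (n + 1) * (schwarzCoeff α n : ℂ) * z ^ (n + 1))
      (z * deriv (schwarzFun α) z) := by
  have hderiv := hasSum_deriv_of_summable_norm (summable_schwarzCoeff hα0 hα)
    (F := fun (n : ℕ) (w : ℂ) => (schwarzCoeff α n : ℂ) * w ^ (n + 1)) (fun n => by fun_prop)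
    isOpen_ball (norm_schwarzCoeff_mul_pow_le_schwarzCoeff hα0 hα) hz
  refine (hderiv.mul_left z).congr_fun fun n => ?_
  simp only [deriv_const_mul_field', deriv_pow_field, Nat.cast_add, Nat.cast_one,
    Nat.add_sub_cancel]
  ring

theorem schwarzFun_ode (hα0 : 0 ≤ α) (hα : α ≤ 3 / 2) (hz : z ∈ ball (0 : ℂ) 1) :
    z * deriv (schwarzFun α) z + 2 * schwarzFun α z =
      (3 - 2 * α) * z +
        z * (z * deriv (schwarzFun α) z + (2 * α - 1) * schwarzFun α z) := by
  have hw := hasSum_schwarzFun hα0 hα hz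
  have hw' := hasSum_mul_deriv_schwarzFun hα0 hα hz
  have hleft := (hasSum_nat_add_iff' 1).2 (hw'.add (hw.mul_left 2))
  have hright := (hw'.add (hw.mul_left (2 * α - 1 : ℂ))).mul_left z
  have hcoeff := hleft.unique (hright.congr_fun fun n => ?_)
  · simp only [Finset.range_one, Finset.sum_singleton, schwarzCoeff_zero] at hcoeff
    push_cast at hcoeff
    linear_combination hcoeff
  · have hrec : ((n : ℂ) + 4) * schwarzCoeff α (n + 1) = (n + 2 * α) * schwarzCoeff α n := by
      exact_mod_cast schwarzCoeff_succ α n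
    push_cast
    linear_combination z ^ (n + 2) * hrec

end SchwarzFun

theorem re_one_add_div_one_sub_pos {w : ℂ} (hw : ‖w‖ < 1) : 0 < ((1 + w) / (1 - w)).re := by
  have hw1 : 1 - w ≠ 0 := sub_ne_zero.2 fun h => by simp [← h] at hw
  have hsq : w.re * w.re + w.im * w.im < 1 := by
    rw [← normSq_apply, normSq_eq_norm_sq]
    exact pow_lt_one₀ (norm_nonneg w) hw two_ne_zero
  rw [div_re, ← add_div]
  refine div_pos ?_ (normSq_pos.2 hw1)
  simp only [add_re, one_re, sub_re, add_im, one_im, sub_im]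
  linarith

/-- The closed form `(1 - α) * (1 - z) ^ (2α - 3) * (1 - w)` of `h_α'`, with `w` the Schwarz
function of `h_α`. -/
noncomputable def hfunDeriv (α : ℝ) (z : ℂ) : ℂ :=
  (1 - α) * ((1 - z) ^ (2 * α - 3 : ℂ) * (1 - schwarzFun α z))

section HFun

variable {α : ℝ} {z : ℂ}

theorem one_sub_mem_slitPlane (hz : z ∈ ball (0 : ℂ) 1) : 1 - z ∈ slitPlane := by
  refine Or.inl ?_
  rw [sub_re, one_re, sub_pos]
  exact (re_le_norm z).trans_lt (mem_ball_zero_iff.1 hz)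

theorem hasDerivAt_one_sub_cpow (c : ℂ) (hz : z ∈ ball (0 : ℂ) 1) :
    HasDerivAt (fun w : ℂ => (1 - w) ^ c) (-c * (1 - z) ^ (c - 1)) z := by
  refine (((hasDerivAt_id z).const_sub 1).cpow_const (one_sub_mem_slitPlane hz)).congr_deriv ?_
  rw [id, mul_neg_one, neg_mul]

theorem hasDerivAt_kfun (α : ℝ) (hz : z ∈ ball (0 : ℂ) 1) :
    HasDerivAt (kfun α) ((1 - z) ^ (2 * α - 2 : ℂ)) z := by
  unfold kfun
  split_ifs with h
  · refine (((hasDerivAt_id z).const_sub 1).clog (one_sub_mem_slitPlane hz)).neg.congr_deriv ?_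
    have hexp : (2 * α - 2 : ℂ) = -1 := by rw [h]; push_cast; norm_num
    rw [hexp, cpow_neg_one, id, neg_div, neg_neg, one_div]
  · refine (((hasDerivAt_one_sub_cpow ((2 * α - 1 : ℝ) : ℂ) hz).sub_const 1).div_const
      _).congr_deriv ?_
    have hne : ((1 - 2 * α : ℝ) : ℂ) ≠ 0 := ofReal_ne_zero.2 fun h' => h (by linarith)
    rw [div_eq_iff hne]
    push_cast
    ring_nf

theorem hfunDeriv_ne_zero (hα0 : 0 ≤ α) (hα : α ≤ 3 / 2) (hα1 : α ≠ 1)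
    (hz : z ∈ ball (0 : ℂ) 1) : hfunDeriv α z ≠ 0 := by
  have hconst : (1 - α : ℂ) ≠ 0 := sub_ne_zero.2 (by exact_mod_cast hα1.symm)
  have hpow : (1 - z) ^ (2 * α - 3 : ℂ) ≠ 0 := fun h =>
    slitPlane_ne_zero (one_sub_mem_slitPlane hz) ((cpow_eq_zero_iff _ _).1 h).1
  exact mul_ne_zero hconst (mul_ne_zero hpow (sub_ne_zero.2 (schwarzFun_ne_one hα0 hα hz).symm))

theorem differentiableAt_hfunDeriv (hα0 : 0 ≤ α) (hα : α ≤ 3 / 2) (hz : z ∈ ball (0 : ℂ) 1) :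
    DifferentiableAt ℂ (hfunDeriv α) z :=
  ((hasDerivAt_one_sub_cpow _ hz).differentiableAt.mul
    ((differentiableAt_schwarzFun hα0 hα hz).const_sub 1)).const_mul _

/-- Differentiating `z * h_α = k_α` twice shows that `h_α'` must satisfy this equation. -/
theorem hfunDeriv_ode (hα0 : 0 ≤ α) (hα : α ≤ 3 / 2) (hz : z ∈ ball (0 : ℂ) 1) :
    z * deriv (hfunDeriv α) z + 2 * hfunDeriv α z =
      (2 - 2 * α) * (1 - z) ^ (2 * α - 3 : ℂ) := by
  have hne := slitPlane_ne_zero (one_sub_mem_slitPlane hz)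
  have hode := schwarzFun_ode hα0 hα hz
  have hderiv : deriv (hfunDeriv α) z = _ :=
    (((hasDerivAt_one_sub_cpow (2 * α - 3 : ℂ) hz).mul
      ((differentiableAt_schwarzFun hα0 hα hz).hasDerivAt.const_sub 1)).const_mul
        (1 - α : ℂ)).deriv
  rw [hderiv, hfunDeriv, cpow_sub _ 1 hne, cpow_one]
  generalize (1 - z) ^ (2 * α - 3 : ℂ) = E
  field_simp
  linear_combination (α - 1 : ℂ) * E * hode

theorem hasDerivAt_sub_mul_hfunDeriv (hα0 : 0 ≤ α) (hα : α ≤ 3 / 2) (hz : z ∈ ball (0 : ℂ) 1) :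
    HasDerivAt (fun w : ℂ => (1 - w) ^ (2 * α - 2 : ℂ) - w * hfunDeriv α w) (hfunDeriv α z) z := by
  refine ((hasDerivAt_one_sub_cpow (2 * α - 2 : ℂ) hz).sub
    ((hasDerivAt_id z).mul (differentiableAt_hfunDeriv hα0 hα hz).hasDerivAt)).congr_deriv ?_
  have hexp : (2 * α - 2 - 1 : ℂ) = 2 * α - 3 := by ring
  rw [hexp, id]
  linear_combination -hfunDeriv_ode hα0 hα hz

theorem kfun_eq (hα0 : 0 ≤ α) (hα : α ≤ 3 / 2) (hz : z ∈ ball (0 : ℂ) 1) :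
    kfun α z = z * ((1 - z) ^ (2 * α - 2 : ℂ) - z * hfunDeriv α z) := by
  have hk : ∀ w ∈ ball (0 : ℂ) 1, HasDerivAt (kfun α) ((1 - w) ^ (2 * α - 2 : ℂ)) w :=
    fun w hw => hasDerivAt_kfun α hw
  have hprod : ∀ w ∈ ball (0 : ℂ) 1,
      HasDerivAt (fun w : ℂ => w * ((1 - w) ^ (2 * α - 2 : ℂ) - w * hfunDeriv α w))
        ((1 - w) ^ (2 * α - 2 : ℂ)) w := fun w hw => by
    refine ((hasDerivAt_id w).mul (hasDerivAt_sub_mul_hfunDeriv hα0 hα hw)).congr_deriv ?_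
    rw [id]
    ring
  exact isOpen_ball.eqOn_of_deriv_eq (convex_ball (0 : ℂ) 1).isPreconnected
    (fun w hw => (hk w hw).differentiableAt.differentiableWithinAt)
    (fun w hw => (hprod w hw).differentiableAt.differentiableWithinAt)
    (fun w hw => (hk w hw).deriv.trans (hprod w hw).deriv.symm) (mem_ball_self one_pos)
    (by simp [kfun]) hz

theorem hfun_eq (hα0 : 0 ≤ α) (hα : α ≤ 3 / 2) (hz : z ∈ ball (0 : ℂ) 1) :
    hfun α z = (1 - z) ^ (2 * α - 2 : ℂ) - z * hfunDeriv α z := by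
  unfold hfun
  split_ifs with h0
  · simp [h0]
  · rw [kfun_eq hα0 hα hz, mul_div_cancel_left₀ _ h0]

theorem hasDerivAt_hfun (hα0 : 0 ≤ α) (hα : α ≤ 3 / 2) (hz : z ∈ ball (0 : ℂ) 1) :
    HasDerivAt (hfun α) (hfunDeriv α z) z :=
  (hasDerivAt_sub_mul_hfunDeriv hα0 hα hz).congr_of_eventuallyEq <|
    Filter.mem_of_superset (isOpen_ball.mem_nhds hz) fun _ => hfun_eq hα0 hα

theorem deriv_deriv_hfun (hα0 : 0 ≤ α) (hα : α ≤ 3 / 2) (hz : z ∈ ball (0 : ℂ) 1) :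
    deriv (deriv (hfun α)) z = deriv (hfunDeriv α) z :=
  Filter.EventuallyEq.deriv_eq <| Filter.mem_of_superset (isOpen_ball.mem_nhds hz) fun _ hw =>
    (hasDerivAt_hfun hα0 hα hw).deriv

theorem one_add_mul_deriv_deriv_hfun_div (hα0 : 0 ≤ α) (hα : α ≤ 3 / 2) (hα1 : α ≠ 1)
    (hz : z ∈ ball (0 : ℂ) 1) :
    1 + z * deriv (deriv (hfun α)) z / deriv (hfun α) z =
      (1 + schwarzFun α z) / (1 - schwarzFun α z) := by
  have hne := hfunDeriv_ne_zero hα0 hα hα1 hz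
  have hw : 1 - schwarzFun α z ≠ 0 := sub_ne_zero.2 (schwarzFun_ne_one hα0 hα hz).symm
  rw [deriv_deriv_hfun hα0 hα hz, (hasDerivAt_hfun hα0 hα hz).deriv, one_add_div hne,
    div_eq_div_iff hne hw]
  have hode := hfunDeriv_ode hα0 hα hz
  have hdef : hfunDeriv α z =
      (1 - α) * ((1 - z) ^ (2 * α - 3 : ℂ) * (1 - schwarzFun α z)) := rfl
  linear_combination (1 - schwarzFun α z) * hode - 2 * hdef

theorem hasPosCurvatureOnCircles_hfun (hα0 : 0 ≤ α) (hα : α ≤ 3 / 2) (hα1 : α ≠ 1) :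
    HasPosCurvatureOnCircles (hfun α) 0 1 where
  differentiableOn z hz := (hasDerivAt_hfun hα0 hα hz).differentiableAt.differentiableWithinAt
  deriv_ne_zero z hz := by
    rw [(hasDerivAt_hfun hα0 hα hz).deriv]
    exact hfunDeriv_ne_zero hα0 hα hα1 hz
  re_pos z hz := by
    rw [sub_zero, one_add_mul_deriv_deriv_hfun_div hα0 hα hα1 hz]
    exact re_one_add_div_one_sub_pos (norm_schwarzFun_lt_one hα0 hα hz)

end HFun

theorem hfun_injOn_convex_image_general (α : ℝ) (hα0 : 0 ≤ α) (hα : α ≤ 3 / 2) (hα1 : α ≠ 1) :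
    Set.InjOn (hfun α) unitDisk ∧
    Convex ℝ (hfun α '' unitDisk) ∧
    ∀ z ∈ unitDisk,
      0 < (1 + z * deriv (deriv (hfun α)) z / deriv (hfun α) z).re := by
  have hh := hasPosCurvatureOnCircles_hfun hα0 hα hα1
  exact ⟨hh.injOn, hh.convex_image_ball, fun z hz => by simpa only [sub_zero] using hh.re_pos z hz⟩

/-- For `0 ≤ α < 1`, the function `h_α(z) = k_α(z)/z` is injective on the
unit disk with convex image, and `Re(1 + z h_α''(z)/h_α'(z)) > 0` on the disk. -/
theorem hfun_injOn_convex_image (α : ℝ) (hα0 : 0 ≤ α) (hα1 : α < 1) :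
    Set.InjOn (hfun α) unitDisk ∧
    Convex ℝ (hfun α '' unitDisk) ∧
    ∀ z ∈ unitDisk,
      0 < (1 + z * deriv (deriv (hfun α)) z / deriv (hfun α) z).re :=
  hfun_injOn_convex_image_general α hα0 (by linarith) hα1.ne
end

section
/- Let 0 < α < 1/2 and f ∈ K(α). Then the values of f(z)/z for z ∈ 𝔻 \ {0} lie in the open sector S = {u + iv : |v| < cot(πα)·(u − 1/(2α−1))}; that is, for all z ∈ 𝔻 with z ≠ 0, |Im(f(z)/z)| < cot(πα)·(Re(f(z)/z) − 1/(2α−1)). -/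
/-! Put `β = 1 - 2α`. Convexity of order `α` says that `re (z f'' / f')` exceeds `-(β + 1) / 2`, so
on slightly smaller disks the Herglotz theorem writes `f'` as a geometric mean
`exp (-(β + 1) ∫ log (1 - x ζ) dμ(x))` of the kernels `(1 - x ζ) ^ (-(β + 1))`, `‖x‖ ≤ 1`. The
geometric mean is the limit of the power means `(∫ (1 - x ζ) ^ (-(β + 1) / n) dμ(x)) ^ n`, and
Euler's beta integral turns a product of two kernels with exponents `p`, `q` into an average of
kernels with exponent `p + q`; hence each power mean is an arithmetic mixture of kernels of exponent
`β + 1`.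

The two half-planes bounding the sector impose on `f'` the condition
`0 ≤ re (exp (± i π α) * (∫₀¹ f' (t z) dt + 1 / β))`, which is preserved by mixtures and limits, and
for a single kernel it reduces to `|arg (u ^ β)| ≤ π β / 2` for `0 < re u`. The maximum principle
makes the inequality strict. -/

section

open MeasureTheory ProbabilityTheory Set Complex Filter Metric
open scoped ComplexConjugate Topology

/-- The binomial kernel `(1 - a) ^ (-p)` (principal branch). Its average over `a = w * ζ`, with `w`
in the closed unit disk, is a mixture in the sense of `IsBinomialMixture`. -/
noncomputable def binomialKernel (p : ℝ) (a : ℂ) : ℂ := (1 - a) ^ (-p : ℂ)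

section Kernel

variable {a : ℂ}

lemma one_sub_mem_slitPlane_s3 (ha : ‖a‖ < 1) : 1 - a ∈ slitPlane := by
  simpa [sub_eq_add_neg] using mem_slitPlane_of_norm_lt_one (z := -a) (by simpa using ha)

lemma one_sub_ne_zero_of_norm_lt_one (ha : ‖a‖ < 1) : 1 - a ≠ 0 :=
  slitPlane_ne_zero (one_sub_mem_slitPlane_s3 ha)

lemma measurable_binomialKernel (p : ℝ) : Measurable (binomialKernel p) := by
  unfold binomialKernel; fun_prop

@[simp]
lemma binomialKernel_zero_right (p : ℝ) : binomialKernel p 0 = 1 := by simp [binomialKernel]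

lemma binomialKernel_one (a : ℂ) : binomialKernel 1 a = (1 - a)⁻¹ := by
  simp [binomialKernel, cpow_neg_one]

lemma binomialKernel_eq_exp (p : ℝ) (ha : ‖a‖ < 1) :
    binomialKernel p a = exp (-p * log (1 - a)) := by
  rw [binomialKernel, cpow_def_of_ne_zero (one_sub_ne_zero_of_norm_lt_one ha), mul_comm]

lemma binomialKernel_mul (p q : ℝ) (ha : ‖a‖ < 1) :
    binomialKernel p a * binomialKernel q a = binomialKernel (p + q) a := by
  simp only [binomialKernel_eq_exp _ ha, ← exp_add]
  push_cast
  ring_nf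

lemma hasDerivAt_binomialKernel (p : ℝ) (ha : ‖a‖ < 1) :
    HasDerivAt (binomialKernel p) (p * binomialKernel (p + 1) a) a := by
  refine (((hasDerivAt_id a).const_sub 1).cpow_const (c := (-p : ℂ))
    (one_sub_mem_slitPlane_s3 ha)).congr_deriv ?_
  simp only [binomialKernel, id, ofReal_add, ofReal_one, neg_add, ← sub_eq_add_neg]
  ring

lemma continuousOn_binomialKernel (p : ℝ) : ContinuousOn (binomialKernel p) (ball 0 1) :=
  fun _ ha ↦ (hasDerivAt_binomialKernel p (by simpa using ha)).continuousAt.continuousWithinAt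

lemma norm_binomialKernel_le {p k : ℝ} (hp : 0 ≤ p) (hk : k < 1) (ha : ‖a‖ ≤ k) :
    ‖binomialKernel p a‖ ≤ (1 - k) ^ (-p) := by
  rw [binomialKernel, ← ofReal_neg, norm_cpow_real]
  refine Real.rpow_le_rpow_of_nonpos (by linarith) ?_ (by linarith)
  calc 1 - k ≤ ‖(1 : ℂ)‖ - ‖a‖ := by rw [norm_one]; linarith
    _ ≤ ‖1 - a‖ := norm_sub_norm_le 1 a

end Kernel

section Beta

variable {p q : ℝ}

lemma measurable_betaPDF (p q : ℝ) : Measurable (betaPDF p q) :=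
  (measurable_betaPDFReal p q).ennreal_ofReal

lemma ae_mem_Ioo_betaMeasure (p q : ℝ) : ∀ᵐ s ∂(betaMeasure p q), s ∈ Ioo (0 : ℝ) 1 := by
  rw [betaMeasure, ae_withDensity_iff (measurable_betaPDF p q)]
  refine .of_forall fun s hs ↦ ⟨?_, ?_⟩ <;> by_contra! h
  · exact hs (betaPDF_eq_zero_of_nonpos h)
  · exact hs (betaPDF_eq_zero_of_one_le h)

lemma toReal_betaPDF (hp : 0 < p) (hq : 0 < q) (s : ℝ) :
    (betaPDF p q s).toReal = betaPDFReal p q s := by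
  refine ENNReal.toReal_ofReal ?_
  by_cases hs : 0 < s ∧ s < 1
  · exact (betaPDFReal_pos hs.1 hs.2 hp hq).le
  · rw [betaPDFReal, if_neg hs]

lemma integrable_betaMeasure_of_continuousOn {E : Type*} [NormedAddCommGroup E] (hp : 0 < p)
    (hq : 0 < q) {g : ℝ → E} (hg : ContinuousOn g (Icc 0 1)) :
    Integrable g (betaMeasure p q) := by
  have := isProbabilityMeasureBeta hp hq
  obtain ⟨C, hC⟩ := isCompact_Icc.exists_bound_of_continuousOn hg
  refine .of_bound ?_ C ((ae_mem_Ioo_betaMeasure p q).mono fun s hs ↦ hC s (Ioo_subset_Icc_self hs))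
  rw [← Measure.restrict_eq_self_of_ae_mem (ae_mem_Ioo_betaMeasure p q)]
  exact (hg.mono Ioo_subset_Icc_self).aestronglyMeasurable measurableSet_Ioo

variable {E : Type*} [NormedAddCommGroup E] [NormedSpace ℝ E]

lemma integrable_betaPDFReal_smul (hp : 0 < p) (hq : 0 < q) {g : ℝ → E}
    (hg : Integrable g (betaMeasure p q)) : Integrable fun s ↦ betaPDFReal p q s • g s := by
  simpa only [toReal_betaPDF hp hq] using (integrable_withDensity_iff_integrable_smul'
    (measurable_betaPDF p q) (.of_forall fun _ ↦ ENNReal.ofReal_lt_top)).1 hg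

lemma integral_betaMeasure (hp : 0 < p) (hq : 0 < q) (g : ℝ → E) :
    ∫ s, g s ∂(betaMeasure p q) = ∫ s in (0 : ℝ)..1, betaPDFReal p q s • g s := by
  rw [intervalIntegral.integral_of_le zero_le_one, integral_Ioc_eq_integral_Ioo,
    ← Measure.restrict_eq_self_of_ae_mem (ae_mem_Ioo_betaMeasure p q), betaMeasure,
    setIntegral_withDensity_eq_setIntegral_toReal_smul (measurable_betaPDF p q)
      (.of_forall fun _ ↦ ENNReal.ofReal_lt_top) g measurableSet_Ioo]
  simp only [toReal_betaPDF hp hq]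

lemma hasDerivAt_rpow_mul_one_sub_rpow {s : ℝ} (hs : s ∈ Ioo (0 : ℝ) 1) (p q : ℝ) :
    HasDerivAt (fun s : ℝ ↦ s ^ p * (1 - s) ^ q)
      (s ^ (p - 1) * (1 - s) ^ (q - 1) * (p - (p + q) * s)) s := by
  have hs0 : s ≠ 0 := hs.1.ne'
  have hs1 : 1 - s ≠ 0 := (sub_pos.2 hs.2).ne'
  refine (((hasDerivAt_id s).rpow_const (.inl hs0)).mul
    (((hasDerivAt_id s).const_sub 1).rpow_const (.inl hs1))).congr_deriv ?_
  simp only [id, Real.rpow_sub_one hs0, Real.rpow_sub_one hs1]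
  field_simp
  ring

lemma integral_betaMeasure_stein [CompleteSpace E] (hp : 0 < p) (hq : 0 < q) {φ φ' : ℝ → E}
    (hφ : ContinuousOn φ (Icc 0 1)) (hφ' : ContinuousOn φ' (Icc 0 1))
    (hd : ∀ s ∈ Ioo (0 : ℝ) 1, HasDerivAt φ (φ' s) s) :
    ∫ s, ((p - (p + q) * s) • φ s + (s * (1 - s)) • φ' s) ∂(betaMeasure p q) = 0 := by
  set g : ℝ → E := fun s ↦ (p - (p + q) * s) • φ s + (s * (1 - s)) • φ' s
  have hg : ContinuousOn g (Icc 0 1) :=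
    (ContinuousOn.smul (by fun_prop) hφ).add (ContinuousOn.smul (by fun_prop) hφ')
  have hderiv : ∀ s ∈ Ioo (0 : ℝ) 1, HasDerivAt (fun s : ℝ ↦ (s ^ p * (1 - s) ^ q) • φ s)
      (beta p q • betaPDFReal p q s • g s) s := by
    intro s hs
    refine ((hasDerivAt_rpow_mul_one_sub_rpow hs p q).smul (hd s hs)).congr_deriv ?_
    have hbeta : beta p q ≠ 0 := (beta_pos hp hq).ne'
    simp only [g, betaPDFReal, if_pos (show 0 < s ∧ s < 1 from hs), smul_add, smul_smul,
      Real.rpow_sub_one hs.1.ne', Real.rpow_sub_one (sub_pos.2 hs.2).ne']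
    have hs0 : s ≠ 0 := hs.1.ne'
    have hs1 : 1 - s ≠ 0 := (sub_pos.2 hs.2).ne'
    rw [add_comm]
    congr 2 <;> field_simp
  have hcont : ContinuousOn (fun s : ℝ ↦ (s ^ p * (1 - s) ^ q) • φ s) (Icc 0 1) :=
    ((Real.continuous_rpow_const hp.le).mul ((Real.continuous_rpow_const hq.le).comp
      (continuous_const.sub continuous_id))).continuousOn.smul hφ
  have hint : IntervalIntegrable (fun s ↦ beta p q • betaPDFReal p q s • g s) volume 0 1 :=
    ((integrable_betaPDFReal_smul hp hq
      (integrable_betaMeasure_of_continuousOn hp hq hg)).smul (beta p q)).intervalIntegrable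
  have hftc := intervalIntegral.integral_eq_sub_of_hasDerivAt_of_le zero_le_one hcont hderiv hint
  rw [intervalIntegral.integral_smul, ← integral_betaMeasure hp hq] at hftc
  simpa [hp.ne', hq.ne', (beta_pos hp hq).ne'] using hftc

end Beta

section BetaAverage

variable {a b : ℂ} {k s : ℝ}

lemma norm_segment_le (ha : ‖a‖ ≤ k) (hb : ‖b‖ ≤ k) (hs : s ∈ Icc (0 : ℝ) 1) :
    ‖s * a + (1 - s) * b‖ ≤ k := by
  simpa using convex_closedBall (0 : ℂ) k (x := a) (y := b) (by simpa using ha) (by simpa using hb)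
    hs.1 (sub_nonneg.2 hs.2) (by ring)

lemma norm_segment_lt_one (ha : ‖a‖ < 1) (hb : ‖b‖ < 1) (hs : s ∈ Icc (0 : ℝ) 1) :
    ‖s * a + (1 - s) * b‖ < 1 :=
  (norm_segment_le (le_max_left _ _) (le_max_right _ _) hs).trans_lt (max_lt ha hb)

lemma continuousOn_binomialKernel_segment (p : ℝ) (ha : ‖a‖ < 1) (hb : ‖b‖ < 1) :
    ContinuousOn (fun s : ℝ ↦ binomialKernel p (s * a + (1 - s) * b)) (Icc 0 1) :=
  (continuousOn_binomialKernel p).comp (by fun_prop) fun s hs ↦ by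
    simpa using norm_segment_lt_one ha hb hs

variable {p q : ℝ}

lemma hasDerivAt_integral_comp_affine {Ω : Type*} [MeasurableSpace Ω] {ν : Measure Ω}
    [IsFiniteMeasure ν] {h : ℂ → ℂ} (hh : DifferentiableOn ℂ h (ball 0 1)) (hm : Measurable h)
    {m e : Ω → ℂ} (hm_meas : Measurable m) (he_meas : Measurable e) (hm_le : ∀ᵐ ω ∂ν, ‖m ω‖ ≤ 1)
    {k : ℝ} (hk : k < 1) {x : ℂ} {t : Set ℂ} (ht : t ∈ 𝓝 x)
    (hle : ∀ᵐ ω ∂ν, ∀ y ∈ t, ‖m ω * y + e ω‖ ≤ k) :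
    HasDerivAt (fun y ↦ ∫ ω, h (m ω * y + e ω) ∂ν)
      (∫ ω, deriv h (m ω * x + e ω) * m ω ∂ν) x := by
  have hsub : closedBall (0 : ℂ) k ⊆ ball 0 1 := closedBall_subset_ball hk
  obtain ⟨B, hB⟩ := (isCompact_closedBall (0 : ℂ) k).exists_bound_of_continuousOn
    (hh.continuousOn.mono hsub)
  obtain ⟨B', hB'⟩ := (isCompact_closedBall (0 : ℂ) k).exists_bound_of_continuousOn
    ((hh.deriv isOpen_ball).continuousOn.mono hsub)
  have hmeas (y : ℂ) {g : ℂ → ℂ} (hg : Measurable g) :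
      Measurable fun ω ↦ g (m ω * y + e ω) := hg.comp ((hm_meas.mul_const y).add he_meas)
  refine (hasDerivAt_integral_of_dominated_loc_of_deriv_le (bound := fun _ ↦ B') ht
    (.of_forall fun y ↦ (hmeas y hm).aestronglyMeasurable)
    (.of_bound (hmeas x hm).aestronglyMeasurable B ?_)
    (F' := fun y ω ↦ deriv h (m ω * y + e ω) * m ω)
    ((hmeas x (measurable_deriv h)).mul hm_meas).aestronglyMeasurable ?_
    (integrable_const _) ?_).2
  · filter_upwards [hle] with ω hω using hB _ (by simpa using hω x (mem_of_mem_nhds ht))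
  · filter_upwards [hle, hm_le] with ω hω hmω y hy
    have hb := hB' _ (mem_closedBall_zero_iff.2 (hω y hy))
    rw [norm_mul]
    exact (mul_le_of_le_one_right (norm_nonneg _) hmω).trans hb
  · filter_upwards [hle] with ω hω y hy
    have hd := (hh.differentiableAt (isOpen_ball.mem_nhds
      (hsub (mem_closedBall_zero_iff.2 (hω y hy))))).hasDerivAt
    exact (hd.comp y (((hasDerivAt_id y).const_mul (m ω)).add_const (e ω))).congr_deriv (by simp)

lemma one_sub_mul_binomialKernel_add_one (p : ℝ) (ha : ‖a‖ < 1) :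
    (1 - a) * binomialKernel (p + 1) a = binomialKernel p a := by
  rw [← binomialKernel_mul p 1 ha, binomialKernel_one, mul_left_comm,
    mul_inv_cancel₀ (one_sub_ne_zero_of_norm_lt_one ha), mul_one]

lemma hasDerivAt_integral_binomialKernel_segment (hp : 0 < p) (hq : 0 < q) (r : ℝ) (ha : ‖a‖ < 1)
    (hb : ‖b‖ < 1) :
    HasDerivAt (fun x ↦ ∫ s, binomialKernel r (s * x + (1 - s : ℂ) * b) ∂(betaMeasure p q))
      (∫ s, r * binomialKernel (r + 1) (s * a + (1 - s) * b) * s ∂(betaMeasure p q)) a := by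
  have := isProbabilityMeasureBeta hp hq
  obtain ⟨k, hak, hk⟩ := exists_between (max_lt ha hb)
  have hs := (ae_mem_Ioo_betaMeasure p q).mono fun s hs ↦ Ioo_subset_Icc_self hs
  refine (hasDerivAt_integral_comp_affine (m := fun s : ℝ ↦ (s : ℂ))
    (e := fun s : ℝ ↦ (1 - s : ℂ) * b)
    (fun x hx ↦ (hasDerivAt_binomialKernel r (by simpa using hx)).differentiableAt
      |>.differentiableWithinAt) (measurable_binomialKernel r) (by fun_prop) (by fun_prop) ?_ hk
    (isOpen_ball.mem_nhds (mem_ball_zero_iff.2 ((le_max_left _ _).trans_lt hak))) ?_).congr_deriv ?_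
  · filter_upwards [hs] with s hs
    rw [norm_real, Real.norm_of_nonneg hs.1]
    exact hs.2
  · filter_upwards [hs] with s hs x hx
    exact norm_segment_le (mem_ball_zero_iff.1 hx).le ((le_max_right _ _).trans hak.le) hs
  · refine integral_congr_ae ?_
    filter_upwards [hs] with s hs
    rw [(hasDerivAt_binomialKernel r (norm_segment_lt_one ha hb hs)).deriv]

lemma one_sub_mul_integral_binomialKernel_segment (hp : 0 < p) (hq : 0 < q) (ha : ‖a‖ < 1)
    (hb : ‖b‖ < 1) :
    (1 - a) * ∫ s, (p + q : ℝ) * binomialKernel (p + q + 1) (s * a + (1 - s) * b) * s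
        ∂(betaMeasure p q) =
      p * ∫ s, binomialKernel (p + q) (s * a + (1 - s) * b) ∂(betaMeasure p q) := by
  have hcont := continuousOn_binomialKernel_segment (a := a) (b := b)
  have hstein := integral_betaMeasure_stein hp hq (hcont (p + q) ha hb)
    (φ' := fun s ↦ (p + q : ℝ) * binomialKernel (p + q + 1) (s * a + (1 - s) * b) * (a - b))
    ((continuousOn_const.mul (hcont _ ha hb)).mul continuousOn_const) fun s hs ↦ by
      have hlin : HasDerivAt (fun s : ℝ ↦ (s * a + (1 - s) * b : ℂ)) (a - b) s := by
        have h := ofRealCLM.hasDerivAt (x := s)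
        refine ((h.mul_const a).add ((h.const_sub 1).mul_const b)).congr_deriv ?_
        simp only [ofRealCLM_apply, ofReal_one]
        ring
      exact (hasDerivAt_binomialKernel (p + q)
        (norm_segment_lt_one ha hb (Ioo_subset_Icc_self hs))).comp s hlin
  rw [← sub_eq_zero, ← neg_eq_zero, neg_sub, ← integral_const_mul, ← integral_const_mul,
    ← integral_sub, ← hstein]
  · refine integral_congr_ae ?_
    filter_upwards [ae_mem_Ioo_betaMeasure p q] with s hs
    rw [← one_sub_mul_binomialKernel_add_one (p + q)
      (norm_segment_lt_one ha hb (Ioo_subset_Icc_self hs))]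
    simp only [real_smul]
    push_cast
    ring
  · exact integrable_betaMeasure_of_continuousOn hp hq (continuousOn_const.mul (hcont _ ha hb))
  · exact integrable_betaMeasure_of_continuousOn hp hq (continuousOn_const.mul
      ((continuousOn_const.mul (hcont _ ha hb)).mul continuous_ofReal.continuousOn))

/-- Euler's beta integral in Feynman's form. -/
lemma integral_betaMeasure_binomialKernel_segment (hp : 0 < p) (hq : 0 < q) (ha : ‖a‖ < 1)
    (hb : ‖b‖ < 1) :
    ∫ s, binomialKernel (p + q) (s * a + (1 - s) * b) ∂(betaMeasure p q) =
      binomialKernel p a * binomialKernel q b := by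
  have := isProbabilityMeasureBeta hp hq
  set g : ℂ → ℂ := fun x ↦ ∫ s, binomialKernel (p + q) (s * x + (1 - s : ℂ) * b) ∂(betaMeasure p q)
  have hd : ∀ x ∈ ball (0 : ℂ) 1, HasDerivAt (fun x ↦ binomialKernel (-p) x * g x) 0 x := by
    intro x hx
    rw [mem_ball_zero_iff] at hx
    refine ((hasDerivAt_binomialKernel (-p) hx).mul
      (hasDerivAt_integral_binomialKernel_segment hp hq (p + q) hx hb)).congr_deriv ?_
    rw [← one_sub_mul_binomialKernel_add_one (-p) hx, mul_right_comm (1 - x),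
      one_sub_mul_integral_binomialKernel_segment hp hq hx hb]
    simp only [ofReal_neg]
    ring
  have hconst := isOpen_ball.is_const_of_deriv_eq_zero (convex_ball (0 : ℂ) 1).isPreconnected
    (fun x hx ↦ (hd x hx).differentiableAt.differentiableWithinAt) (fun x hx ↦ (hd x hx).deriv)
    (mem_ball_zero_iff.2 ha) (mem_ball_zero_iff.2 hb)
  have hgb : g b = binomialKernel (p + q) b := by
    simp only [g, ← add_mul, add_sub_cancel, one_mul, integral_const, probReal_univ, one_smul]
  rw [hgb, binomialKernel_mul _ _ hb, neg_add_cancel_left] at hconst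
  rw [← hconst, ← mul_assoc, binomialKernel_mul _ _ ha, add_neg_cancel]
  simp [binomialKernel, g]

end BetaAverage

/-- `F` agrees on the unit disk with a mixture `∫ (1 - w ζ) ^ (-p) dν(w)` of binomial kernels, for a
probability measure `ν` carried by the closed unit disk. -/
def IsBinomialMixture (p : ℝ) (F : ℂ → ℂ) : Prop :=
  ∃ ν : Measure ℂ, IsProbabilityMeasure ν ∧ (∀ᵐ w ∂ν, ‖w‖ ≤ 1) ∧
    ∀ ζ ∈ ball (0 : ℂ) 1, F ζ = ∫ w, binomialKernel p (w * ζ) ∂ν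

section Mixture

variable {p q : ℝ} {F G : ℂ → ℂ}

lemma norm_mul_lt_one {w ζ : ℂ} (hw : ‖w‖ ≤ 1) (hζ : ‖ζ‖ < 1) : ‖w * ζ‖ < 1 := by
  rw [norm_mul]
  exact (mul_le_of_le_one_left (norm_nonneg ζ) hw).trans_lt hζ

lemma ae_norm_binomialKernel_mul_le {ν : Measure ℂ} (hp : 0 ≤ p) (hν : ∀ᵐ w ∂ν, ‖w‖ ≤ 1) {ζ : ℂ}
    (hζ : ‖ζ‖ < 1) : ∀ᵐ w ∂ν, ‖binomialKernel p (w * ζ)‖ ≤ (1 - ‖ζ‖) ^ (-p) := by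
  filter_upwards [hν] with w hw
  refine norm_binomialKernel_le hp hζ ?_
  rw [norm_mul]
  exact mul_le_of_le_one_left (norm_nonneg ζ) hw

lemma integrable_binomialKernel_mul {ν : Measure ℂ} [IsFiniteMeasure ν] (hp : 0 ≤ p)
    (hν : ∀ᵐ w ∂ν, ‖w‖ ≤ 1) {ζ : ℂ} (hζ : ‖ζ‖ < 1) :
    Integrable (fun w ↦ binomialKernel p (w * ζ)) ν :=
  .of_bound ((measurable_binomialKernel p).comp (measurable_mul_const ζ)).aestronglyMeasurable _
    (ae_norm_binomialKernel_mul_le hp hν hζ)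

lemma IsBinomialMixture.norm_le (hF : IsBinomialMixture p F) (hp : 0 ≤ p) {ζ : ℂ}
    (hζ : ζ ∈ ball (0 : ℂ) 1) : ‖F ζ‖ ≤ (1 - ‖ζ‖) ^ (-p) := by
  obtain ⟨ν, _, hν, h⟩ := hF
  rw [h ζ hζ]
  simpa using norm_integral_le_of_norm_le_const
    (ae_norm_binomialKernel_mul_le hp hν (mem_ball_zero_iff.1 hζ))

lemma IsBinomialMixture.mul (hF : IsBinomialMixture p F) (hG : IsBinomialMixture q G) (hp : 0 < p)
    (hq : 0 < q) : IsBinomialMixture (p + q) (F * G) := by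
  obtain ⟨ν, _, hν, hF⟩ := hF
  obtain ⟨ν', _, hν', hG⟩ := hG
  have := isProbabilityMeasureBeta hp hq
  set π : (ℂ × ℂ) × ℝ → ℂ := fun y ↦ y.2 * y.1.1 + (1 - y.2) * y.1.2
  have hπ : Measurable π := by fun_prop
  have hpair : ∀ᵐ y ∂(ν.prod ν'), ‖y.1‖ ≤ 1 ∧ ‖y.2‖ ≤ 1 :=
    (Measure.quasiMeasurePreserving_fst.ae hν).and (Measure.quasiMeasurePreserving_snd.ae hν')
  have hmap : ∀ᵐ w ∂(((ν.prod ν').prod (betaMeasure p q)).map π), ‖w‖ ≤ 1 := by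
    rw [ae_map_iff hπ.aemeasurable (measurableSet_le measurable_norm measurable_const)]
    filter_upwards [Measure.quasiMeasurePreserving_fst.ae hpair,
      Measure.quasiMeasurePreserving_snd.ae (ae_mem_Ioo_betaMeasure p q)] with y hy hs
    exact norm_segment_le hy.1 hy.2 (Ioo_subset_Icc_self hs)
  have : IsProbabilityMeasure (((ν.prod ν').prod (betaMeasure p q)).map π) :=
    Measure.isProbabilityMeasure_map hπ.aemeasurable
  refine ⟨_, this, hmap, fun ζ hζ ↦ ?_⟩
  rw [mem_ball_zero_iff] at hζ
  have hint := integrable_binomialKernel_mul (add_pos hp hq).le hmap hζ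
  calc F ζ * G ζ
      = ∫ y, binomialKernel p (y.1 * ζ) * binomialKernel q (y.2 * ζ) ∂(ν.prod ν') := by
        rw [hF ζ (by simpa), hG ζ (by simpa), ← integral_prod_mul]
    _ = ∫ y, ∫ s, binomialKernel (p + q) (π (y, s) * ζ) ∂(betaMeasure p q) ∂(ν.prod ν') := by
        refine integral_congr_ae ?_
        filter_upwards [hpair] with y hy
        rw [← integral_betaMeasure_binomialKernel_segment hp hq (norm_mul_lt_one hy.1 hζ)
          (norm_mul_lt_one hy.2 hζ)]
        simp only [π, add_mul, mul_assoc]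
    _ = ∫ w, binomialKernel (p + q) (w * ζ) ∂(((ν.prod ν').prod (betaMeasure p q)).map π) := by
        rw [integral_map hπ.aemeasurable hint.1]
        exact (integral_prod _ ((integrable_map_measure hint.1 hπ.aemeasurable).1 hint)).symm

lemma IsBinomialMixture.pow (hF : IsBinomialMixture p F) (hp : 0 < p) (n : ℕ) :
    IsBinomialMixture ((n + 1) * p) (F ^ (n + 1)) := by
  induction n with
  | zero => simpa using hF
  | succ n ih =>
    rw [pow_succ]
    convert ih.mul hF (by positivity) hp using 1
    push_cast
    ring

end Mixture

section GeometricMean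

variable {Ω : Type*} [MeasurableSpace Ω] {μ : Measure Ω} [IsProbabilityMeasure μ]

lemma norm_mul_exp_div_sub_one_le {x : ℂ} {n : ℕ} (h : ‖x‖ ≤ n) :
    ‖n * (exp (x / n) - 1)‖ ≤ 2 * ‖x‖ := by
  rcases n.eq_zero_or_pos with rfl | hn
  · simp
  have hn' : (0 : ℝ) < n := by exact_mod_cast hn
  have hx : ‖x / n‖ ≤ 1 := by
    rwa [norm_div, Complex.norm_natCast, div_le_one hn']
  calc ‖n * (exp (x / n) - 1)‖ = n * ‖exp (x / n) - 1‖ := by rw [norm_mul, Complex.norm_natCast]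
    _ ≤ n * (2 * ‖x / n‖) := by gcongr; exact norm_exp_sub_one_le hx
    _ = 2 * ‖x‖ := by rw [norm_div, Complex.norm_natCast]; field_simp

lemma tendsto_mul_exp_div_sub_one (x : ℂ) :
    Tendsto (fun n : ℕ ↦ n * (exp (x / n) - 1)) atTop (𝓝 x) := by
  have hd : HasDerivAt (fun u : ℝ ↦ exp (u * x)) x 0 := by
    simpa using ((ofRealCLM.hasDerivAt (x := 0)).mul_const x).cexp
  refine (hd.tendsto_slope_zero_right.comp (tendsto_inv_atTop_nhdsGT_zero.comp
    tendsto_natCast_atTop_atTop)).congr fun n ↦ ?_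
  simp [div_eq_inv_mul]

lemma tendsto_integral_exp_div_pow {ℓ : Ω → ℂ} (hℓ : AEStronglyMeasurable ℓ μ) {C : ℝ}
    (hC : ∀ᵐ ω ∂μ, ‖ℓ ω‖ ≤ C) :
    Tendsto (fun n : ℕ ↦ (∫ ω, exp (ℓ ω / n) ∂μ) ^ n) atTop (𝓝 (exp (∫ ω, ℓ ω ∂μ))) := by
  have hmeas (n : ℕ) : AEStronglyMeasurable (fun ω ↦ exp (ℓ ω / n)) μ :=
    continuous_exp.comp_aestronglyMeasurable
      ((continuous_id.div_const _).comp_aestronglyMeasurable hℓ)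
  have hint (n : ℕ) : Integrable (fun ω ↦ exp (ℓ ω / n)) μ := by
    refine .of_bound (hmeas n) (Real.exp (C / n)) (hC.mono fun ω hω ↦ ?_)
    refine (norm_exp_le_exp_norm _).trans (Real.exp_le_exp.2 ?_)
    rw [norm_div, Complex.norm_natCast]
    gcongr
  have hlim : Tendsto (fun n : ℕ ↦ ∫ ω, n * (exp (ℓ ω / n) - 1) ∂μ) atTop (𝓝 (∫ ω, ℓ ω ∂μ)) := by
    refine tendsto_integral_filter_of_norm_le_const
      (.of_forall fun n ↦ ((hmeas n).sub aestronglyMeasurable_const).const_mul _) ⟨2 * C, ?_⟩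
      (.of_forall fun ω ↦ tendsto_mul_exp_div_sub_one (ℓ ω))
    filter_upwards [tendsto_natCast_atTop_atTop.eventually_ge_atTop C] with n hn
    filter_upwards [hC] with ω hω
    exact (norm_mul_exp_div_sub_one_le (hω.trans hn)).trans (by gcongr)
  have hpow := tendsto_one_add_pow_exp_of_tendsto (g := fun n ↦ ∫ ω, (exp (ℓ ω / n) - 1) ∂μ)
    (by simpa only [integral_const_mul] using hlim)
  refine hpow.congr fun n ↦ ?_
  rw [integral_sub (hint n) (integrable_const 1), integral_const, probReal_univ, one_smul,
    add_sub_cancel]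

end GeometricMean

section Herglotz

variable {G : ℂ → ℂ} {z : ℂ}

lemma circleAverage_conj {g : ℂ → ℂ} (hg : CircleIntegrable g 0 1) :
    Real.circleAverage (fun ζ ↦ conj (g ζ)) 0 1 = conj (Real.circleAverage g 0 1) :=
  conjCLE.toContinuousLinearMap.circleAverage_comp_comm hg

lemma norm_inv_mul_lt_one (hz : ‖z‖ < 1) {ζ : ℂ} (hζ : ζ ∈ sphere (0 : ℂ) 1) : ‖ζ⁻¹ * z‖ < 1 :=
  norm_mul_lt_one (by rw [norm_inv, mem_sphere_zero_iff_norm.1 hζ, inv_one]) hz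

lemma circleIntegrable_cauchyKernel_mul (hG : ContinuousOn G (sphere 0 1)) (hz : ‖z‖ < 1) :
    CircleIntegrable (fun ζ ↦ (1 - ζ⁻¹ * z)⁻¹ * G ζ) 0 1 := by
  have hinv : ContinuousOn (fun ζ : ℂ ↦ ζ⁻¹) (sphere 0 1) :=
    continuousOn_inv₀.mono fun ζ hζ ↦ ne_zero_of_mem_unit_sphere ⟨ζ, hζ⟩
  exact (((continuousOn_const.sub (hinv.mul continuousOn_const)).inv₀ fun ζ hζ ↦
    one_sub_ne_zero_of_norm_lt_one (norm_inv_mul_lt_one hz hζ)).mul hG).circleIntegrable zero_le_one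

lemma circleAverage_cauchyKernel_mul (hG : DiffContOnCl ℂ G (ball 0 1)) (hz : ‖z‖ < 1) :
    Real.circleAverage (fun ζ ↦ (1 - ζ⁻¹ * z)⁻¹ * G ζ) 0 1 = G z := by
  rw [← DiffContOnCl.circleAverage_smul_div (f := G) (c := 0) (R := 1) (by simpa)
    (by simpa using hz)]
  refine Real.circleAverage_congr_sphere fun ζ hζ ↦ ?_
  rw [abs_one] at hζ
  have hζ0 : ζ ≠ 0 := ne_zero_of_mem_unit_sphere ⟨ζ, hζ⟩
  simp only [sub_zero, smul_eq_mul]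
  rw [inv_mul_eq_div ζ z, one_sub_div hζ0, inv_div]

/-- On the unit circle the Cauchy kernel of `z` is the conjugate of a function holomorphic in the
disk, so the mean value property applies to the conjugate of the integrand. -/
lemma circleAverage_cauchyKernel_mul_conj (hG : DiffContOnCl ℂ G (ball 0 1)) (hz : ‖z‖ < 1) :
    Real.circleAverage (fun ζ ↦ (1 - ζ⁻¹ * z)⁻¹ * conj (G ζ)) 0 1 = conj (G 0) := by
  set H : ℂ → ℂ := fun ζ ↦ (1 - ζ * conj z)⁻¹ * G ζ
  have hH : DiffContOnCl ℂ H (ball 0 1) := by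
    refine .smul (.inv ((differentiable_id.mul_const _).const_sub 1).diffContOnCl fun ζ hζ ↦ ?_) hG
    rw [closure_ball _ one_ne_zero, mem_closedBall_zero_iff] at hζ
    exact one_sub_ne_zero_of_norm_lt_one (norm_mul_lt_one hζ (by rwa [norm_conj]))
  have hmean : Real.circleAverage H 0 1 = G 0 := by
    rw [DiffContOnCl.circleAverage (by simpa)]
    simp [H]
  rw [← hmean, ← circleAverage_conj
    ((hH.continuousOn_ball.mono sphere_subset_closedBall).circleIntegrable zero_le_one)]
  refine Real.circleAverage_congr_sphere fun ζ hζ ↦ ?_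
  rw [abs_one, mem_sphere_zero_iff_norm] at hζ
  simp only [H, map_mul, map_inv₀, map_sub, map_one, conj_conj, inv_eq_conj hζ]

lemma circleAverage_cauchyKernel_mul_two_re_sub_one (hG : DiffContOnCl ℂ G (ball 0 1))
    (h0 : G 0 = 1) (hz : ‖z‖ < 1) :
    Real.circleAverage (fun ζ ↦ (2 * (G ζ).re - 1) • (1 - ζ⁻¹ * z)⁻¹) 0 1 = G z := by
  have hGc := hG.continuousOn_ball.mono sphere_subset_closedBall
  have hsplit (ζ : ℂ) : (2 * (G ζ).re - 1) • (1 - ζ⁻¹ * z)⁻¹ =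
      (1 - ζ⁻¹ * z)⁻¹ * (G ζ - 1) + (1 - ζ⁻¹ * z)⁻¹ * conj (G ζ) := by
    have hre := add_conj (G ζ)
    push_cast at hre
    rw [real_smul]
    push_cast
    linear_combination -(1 - ζ⁻¹ * z)⁻¹ * hre
  simp_rw [hsplit]
  rw [Real.circleAverage_fun_add
      (circleIntegrable_cauchyKernel_mul (G := fun ζ ↦ G ζ - 1) (hGc.sub continuousOn_const) hz)
      (circleIntegrable_cauchyKernel_mul (G := fun ζ ↦ conj (G ζ))
        (continuous_conj.comp_continuousOn hGc) hz),
    circleAverage_cauchyKernel_mul (G := fun ζ ↦ G ζ - 1) (hG.sub_const 1) hz,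
    circleAverage_cauchyKernel_mul_conj hG hz, h0, map_one, sub_add_cancel]

/-- The **Herglotz representation theorem**, normalised to the half-plane `1 / 2 ≤ re`. -/
lemma exists_measure_integral_inv_one_sub_eq (hG : DiffContOnCl ℂ G (ball 0 1)) (h0 : G 0 = 1)
    (hre : ∀ ζ ∈ sphere (0 : ℂ) 1, 1 / 2 ≤ (G ζ).re) :
    ∃ μ : Measure ℂ, IsProbabilityMeasure μ ∧ (∀ᵐ x ∂μ, ‖x‖ ≤ 1) ∧
      ∀ z ∈ ball (0 : ℂ) 1, ∫ x, (1 - x * z)⁻¹ ∂μ = G z := by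
  have hmem : ∀ θ, circleMap 0 1 θ ∈ sphere (0 : ℂ) 1 := circleMap_mem_sphere _ zero_le_one
  have hGc : Continuous fun θ : ℝ ↦ G (circleMap 0 1 θ) :=
    (hG.continuousOn_ball.mono sphere_subset_closedBall).comp_continuous (continuous_circleMap 0 1)
      hmem
  set d : ℝ → ℝ := fun θ ↦ (2 * Real.pi)⁻¹ * (2 * (G (circleMap 0 1 θ)).re - 1)
  have hd (θ : ℝ) : 0 ≤ d θ := mul_nonneg (by positivity) (by linarith [hre _ (hmem θ)])
  have hdm : Measurable fun θ ↦ ENNReal.ofReal (d θ) := by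
    have := continuous_re.comp hGc
    exact Measurable.ennreal_ofReal (by fun_prop)
  have hxm : Measurable fun θ ↦ (circleMap 0 1 θ)⁻¹ := (measurable_circleMap 0 1).inv
  set μ : Measure ℂ := ((volume.restrict (Ioc 0 (2 * Real.pi))).withDensity
    fun θ ↦ ENNReal.ofReal (d θ)).map fun θ ↦ (circleMap 0 1 θ)⁻¹
  have hint : ∀ z ∈ ball (0 : ℂ) 1, ∫ x, (1 - x * z)⁻¹ ∂μ = G z := by
    intro z hz
    rw [integral_map hxm.aemeasurable (by fun_prop),
      integral_withDensity_eq_integral_toReal_smul hdm (by simp),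
      ← intervalIntegral.integral_of_le (by positivity),
      ← circleAverage_cauchyKernel_mul_two_re_sub_one hG h0 (mem_ball_zero_iff.1 hz),
      Real.circleAverage_def, ← intervalIntegral.integral_smul]
    simp only [ENNReal.toReal_ofReal (hd _), d, smul_smul]
  have hprob : μ.real univ = 1 := by
    have h := hint 0 (mem_ball_self one_pos)
    simpa [h0] using congrArg re h
  refine ⟨μ, ⟨(ENNReal.toReal_eq_one_iff _).1 hprob⟩, ?_, hint⟩
  rw [ae_map_iff hxm.aemeasurable (measurableSet_le measurable_norm measurable_const)]
  refine .of_forall fun θ ↦ ?_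
  rw [norm_inv, mem_sphere_zero_iff_norm.1 (hmem θ), inv_one]

end Herglotz

section Approximation

variable {μ : Measure ℂ} {p : ℝ} {ζ : ℂ} {Φ : ℂ → ℂ}

lemma differentiableOn_log_one_sub : DifferentiableOn ℂ (fun a ↦ log (1 - a)) (ball 0 1) :=
  fun _ ha ↦ ((differentiableAt_id.const_sub 1).clog
    (one_sub_mem_slitPlane_s3 (mem_ball_zero_iff.1 ha))).differentiableWithinAt

lemma hasDerivAt_integral_log_one_sub_mul [IsFiniteMeasure μ] (hμ : ∀ᵐ x ∂μ, ‖x‖ ≤ 1)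
    (hζ : ‖ζ‖ < 1) :
    HasDerivAt (fun ζ ↦ ∫ x, log (1 - x * ζ) ∂μ) (-∫ x, (1 - x * ζ)⁻¹ * x ∂μ) ζ := by
  obtain ⟨k, hζk, hk⟩ := exists_between hζ
  have hd := hasDerivAt_integral_comp_affine differentiableOn_log_one_sub (by fun_prop)
    measurable_id measurable_zero hμ hk (isOpen_ball.mem_nhds (mem_ball_zero_iff.2 hζk)) (by
      filter_upwards [hμ] with x hx y hy
      simp only [id, Pi.zero_apply, add_zero, norm_mul]
      exact (mul_le_of_le_one_left (norm_nonneg y) hx).trans (mem_ball_zero_iff.1 hy).le)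
  simp only [id, Pi.zero_apply, add_zero] at hd
  refine hd.congr_deriv ?_
  rw [← integral_neg]
  refine integral_congr_ae ?_
  filter_upwards [hμ] with x hx
  have hlog : HasDerivAt (fun a ↦ log (1 - a)) (-1 / (1 - x * ζ)) (x * ζ) :=
    ((hasDerivAt_id _).const_sub 1).clog (one_sub_mem_slitPlane_s3 (norm_mul_lt_one hx hζ))
  rw [hlog.deriv]
  ring

lemma mul_integral_inv_one_sub_mul_mul [IsFiniteMeasure μ] (hμ : ∀ᵐ x ∂μ, ‖x‖ ≤ 1)
    (hζ : ‖ζ‖ < 1) :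
    ζ * ∫ x, (1 - x * ζ)⁻¹ * x ∂μ = (∫ x, (1 - x * ζ)⁻¹ ∂μ) - μ.real univ := by
  have hint : Integrable (fun x ↦ (1 - x * ζ)⁻¹) μ := by
    simpa only [binomialKernel_one] using integrable_binomialKernel_mul zero_le_one hμ hζ
  rw [← integral_const_mul, ← mul_one (μ.real univ : ℂ), ← real_smul, ← integral_const,
    ← integral_sub hint (integrable_const 1)]
  refine integral_congr_ae ?_
  filter_upwards [hμ] with x hx
  linear_combination -mul_inv_cancel₀ (one_sub_ne_zero_of_norm_lt_one (norm_mul_lt_one hx hζ))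

lemma eqOn_const_of_mul_deriv_eq_zero {H : ℂ → ℂ} (hH : DifferentiableOn ℂ H (ball 0 1))
    (h : ∀ ζ ∈ ball (0 : ℂ) 1, ζ * deriv H ζ = 0) : EqOn H (fun _ ↦ H 0) (ball 0 1) := by
  have hne : ∀ ζ ∈ ball (0 : ℂ) 1, ζ ≠ 0 → deriv H ζ = 0 := fun ζ hζ hζ0 ↦
    (mul_eq_zero.1 (h ζ hζ)).resolve_left hζ0
  have hzero : deriv H 0 = 0 := by
    have hcont : Tendsto (deriv H) (𝓝[≠] 0) (𝓝 (deriv H 0)) :=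
      ((hH.deriv isOpen_ball).continuousOn.continuousAt
        (ball_mem_nhds 0 one_pos)).continuousWithinAt
    refine tendsto_nhds_unique hcont (tendsto_const_nhds.congr' ?_)
    filter_upwards [self_mem_nhdsWithin, nhdsWithin_le_nhds (ball_mem_nhds 0 one_pos)] with ζ h0 hζ
    exact (hne ζ hζ h0).symm
  refine fun ζ hζ ↦ isOpen_ball.is_const_of_deriv_eq_zero (convex_ball (0 : ℂ) 1).isPreconnected hH
    (fun ζ hζ ↦ ?_) hζ (mem_ball_self one_pos)
  rcases eq_or_ne ζ 0 with rfl | hζ0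
  exacts [hzero, hne ζ hζ hζ0]

variable [IsProbabilityMeasure μ]

lemma eq_exp_neg_mul_integral_log (hp : p ≠ 0) (hμ : ∀ᵐ x ∂μ, ‖x‖ ≤ 1)
    (hΦ : DifferentiableOn ℂ Φ (ball 0 1)) (hΦ0 : Φ 0 = 1) (hne : ∀ ζ ∈ ball (0 : ℂ) 1, Φ ζ ≠ 0)
    (h : ∀ ζ ∈ ball (0 : ℂ) 1, ∫ x, (1 - x * ζ)⁻¹ ∂μ = 1 + ζ * deriv Φ ζ / Φ ζ / p)
    (hζ : ζ ∈ ball (0 : ℂ) 1) : Φ ζ = exp (-p * ∫ x, log (1 - x * ζ) ∂μ) := by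
  set Ψ : ℂ → ℂ := fun ζ ↦ ∫ x, log (1 - x * ζ) ∂μ
  have hd : ∀ ζ ∈ ball (0 : ℂ) 1, HasDerivAt (fun ζ ↦ Φ ζ * exp (p * Ψ ζ))
      (deriv Φ ζ * exp (p * Ψ ζ) +
        Φ ζ * (exp (p * Ψ ζ) * (p * -∫ x, (1 - x * ζ)⁻¹ * x ∂μ))) ζ := fun ζ hζ ↦
    (hΦ.differentiableAt (isOpen_ball.mem_nhds hζ)).hasDerivAt.mul
      ((hasDerivAt_integral_log_one_sub_mul hμ (mem_ball_zero_iff.1 hζ)).const_mul (p : ℂ)).cexp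
  have hconst := eqOn_const_of_mul_deriv_eq_zero
    (fun ζ hζ ↦ (hd ζ hζ).differentiableAt.differentiableWithinAt) (fun ζ hζ ↦ by
      have hint := mul_integral_inv_one_sub_mul_mul hμ (mem_ball_zero_iff.1 hζ)
      rw [h ζ hζ, probReal_univ, ofReal_one, add_sub_cancel_left] at hint
      have hΦζ := hne ζ hζ
      have hpc : (p : ℂ) ≠ 0 := ofReal_ne_zero.2 hp
      rw [(hd ζ hζ).deriv]
      calc _ = exp (p * Ψ ζ) * (ζ * deriv Φ ζ - p * Φ ζ * (ζ * ∫ x, (1 - x * ζ)⁻¹ * x ∂μ)) := by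
            ring
        _ = 0 := by
          rw [hint]
          field_simp
          ring) hζ
  have hone : Φ ζ * exp (p * Ψ ζ) = 1 := by simpa [Ψ, hΦ0] using hconst
  rw [neg_mul, exp_neg]
  exact eq_inv_of_mul_eq_one_left hone

lemma tendsto_integral_binomialKernel_pow (p : ℝ) (hμ : ∀ᵐ x ∂μ, ‖x‖ ≤ 1) (hζ : ‖ζ‖ < 1) :
    Tendsto (fun n : ℕ ↦ (∫ x, binomialKernel (p / n) (x * ζ) ∂μ) ^ n) atTop
      (𝓝 (exp (-p * ∫ x, log (1 - x * ζ) ∂μ))) := by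
  obtain ⟨C, hC⟩ := (isCompact_closedBall (0 : ℂ) ‖ζ‖).exists_bound_of_continuousOn
    ((differentiableOn_log_one_sub.const_mul (-p : ℂ)).continuousOn.mono
      (closedBall_subset_ball hζ))
  rw [← integral_const_mul]
  have hmeas : Measurable fun x ↦ -p * log (1 - x * ζ) := by fun_prop
  refine (tendsto_integral_exp_div_pow (C := C) hmeas.aestronglyMeasurable
    (hμ.mono fun x hx ↦ hC _ ?_)).congr fun n ↦ ?_
  · rw [mem_closedBall_zero_iff, norm_mul]
    exact mul_le_of_le_one_left (norm_nonneg ζ) hx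
  · congr 1
    refine integral_congr_ae ?_
    filter_upwards [hμ] with x hx
    rw [binomialKernel_eq_exp _ (norm_mul_lt_one hx hζ)]
    push_cast
    ring_nf

lemma isBinomialMixture_integral_binomialKernel_div_pow (hp : 0 < p) (hμ : ∀ᵐ x ∂μ, ‖x‖ ≤ 1)
    (n : ℕ) :
    IsBinomialMixture p
      (fun ζ ↦ (∫ x, binomialKernel (p / (n + 1 : ℕ)) (x * ζ) ∂μ) ^ (n + 1)) := by
  have hbase : IsBinomialMixture (p / (n + 1 : ℕ))
      fun ζ ↦ ∫ x, binomialKernel (p / (n + 1 : ℕ)) (x * ζ) ∂μ :=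
    ⟨μ, inferInstance, hμ, fun _ _ ↦ rfl⟩
  convert hbase.pow (by positivity) n using 1
  · push_cast
    field_simp
  · rfl

lemma exists_tendsto_isBinomialMixture (hp : 0 < p) {R : ℝ} (hR : 1 < R)
    (hΦ : DifferentiableOn ℂ Φ (ball 0 R)) (hΦ0 : Φ 0 = 1) (hne : ∀ ζ ∈ ball (0 : ℂ) R, Φ ζ ≠ 0)
    (hre : ∀ ζ ∈ sphere (0 : ℂ) 1, -(p / 2) ≤ (ζ * deriv Φ ζ / Φ ζ).re) :
    ∃ F : ℕ → ℂ → ℂ, (∀ n, IsBinomialMixture p (F n)) ∧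
      ∀ ζ ∈ ball (0 : ℂ) 1, Tendsto (fun n ↦ F n ζ) atTop (𝓝 (Φ ζ)) := by
  set G : ℂ → ℂ := fun ζ ↦ 1 + ζ * deriv Φ ζ / Φ ζ / p
  have hG : DiffContOnCl ℂ G (ball 0 1) :=
    ((((differentiableOn_id.mul (hΦ.deriv isOpen_ball)).div hΦ hne).div_const _).const_add
      1).diffContOnCl_ball (closedBall_subset_ball hR)
  have hGre : ∀ ζ ∈ sphere (0 : ℂ) 1, 1 / 2 ≤ (G ζ).re := by
    intro ζ hζ
    have hdiv : -(p / 2) / p ≤ (ζ * deriv Φ ζ / Φ ζ).re / p := by gcongr; exact hre ζ hζ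
    rw [neg_div, div_right_comm, div_self hp.ne'] at hdiv
    simp only [G, add_re, one_re, div_ofReal_re]
    linarith
  obtain ⟨μ, _, hμ, hμG⟩ := exists_measure_integral_inv_one_sub_eq hG (by simp [G]) hGre
  have hsub : ball (0 : ℂ) 1 ⊆ ball 0 R := ball_subset_ball hR.le
  refine ⟨_, isBinomialMixture_integral_binomialKernel_div_pow hp hμ, fun ζ hζ ↦ ?_⟩
  rw [eq_exp_neg_mul_integral_log hp.ne' hμ (hΦ.mono hsub) hΦ0 (fun ζ hζ ↦ hne ζ (hsub hζ)) hμG hζ]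
  exact (tendsto_integral_binomialKernel_pow p hμ (mem_ball_zero_iff.1 hζ)).comp
    (tendsto_add_atTop_nat 1)

end Approximation

section HalfPlane

variable {β : ℝ} {a c z : ℂ} {F Φ : ℂ → ℂ}

lemma norm_ofReal_mul_le {t : ℝ} (ht : t ∈ Icc (0 : ℝ) 1) (z : ℂ) : ‖t * z‖ ≤ ‖z‖ := by
  rw [norm_mul, norm_real, Real.norm_of_nonneg ht.1]
  exact mul_le_of_le_one_left (norm_nonneg z) ht.2

lemma integral_deriv_ofReal_mul {f f' : ℂ → ℂ} (hf' : ContinuousOn f' (ball 0 1))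
    (hd : ∀ w ∈ ball (0 : ℂ) 1, HasDerivAt f (f' w) w) (hz : ‖z‖ < 1) :
    z * ∫ t in (0 : ℝ)..1, f' (t * z) = f z - f 0 := by
  have hmem : ∀ t ∈ Icc (0 : ℝ) 1, (0 : ℂ) + t • z ∈ ball (0 : ℂ) 1 := fun t ht ↦ by
    simpa only [zero_add, real_smul, mem_ball_zero_iff] using
      (norm_ofReal_mul_le ht z).trans_lt hz
  simpa using intervalIntegral.integral_unitInterval_deriv_eq_sub (z₀ := (0 : ℂ)) (z₁ := z)
    (hf'.comp (by fun_prop) hmem) fun t ht ↦ hd _ (hmem t ht)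

lemma neg_one_lt_re_div_one_sub (ha : ‖a‖ < 1) : -1 < (a / (1 - a)).re := by
  have hne := one_sub_ne_zero_of_norm_lt_one ha
  have hinv : 0 < ((1 - a)⁻¹).re := by
    rw [inv_re]
    refine div_pos ?_ (normSq_pos.2 hne)
    simpa using (re_le_norm a).trans_lt ha
  have hy : a / (1 - a) = (1 - a)⁻¹ - 1 := by field_simp; ring
  rw [hy, sub_re, one_re]
  linarith

lemma re_one_add_ofReal_mul_pos (ha : -1 < a.re) {s : ℝ} (hs : s ∈ Icc (0 : ℝ) 1) :
    0 < (1 + s * a).re := by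
  rw [add_re, one_re, re_ofReal_mul]
  rcases hs.1.eq_or_lt with rfl | hs0
  · simp
  · linarith [mul_lt_mul_of_pos_left ha hs0, hs.2]

lemma continuousOn_one_add_ofReal_mul_cpow (ha : -1 < a.re) (b : ℂ) :
    ContinuousOn (fun s : ℝ ↦ (1 + s * a) ^ b) (Icc 0 1) :=
  ContinuousOn.cpow_const (by fun_prop) fun _ hs ↦ .inl (re_one_add_ofReal_mul_pos ha hs)

lemma mul_integral_one_add_ofReal_mul_cpow (ha : -1 < a.re) (b : ℂ) :
    a * ∫ s in (0 : ℝ)..1, (b + 1) * (1 + s * a) ^ b = (1 + a) ^ (b + 1) - 1 := by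
  have h := intervalIntegral.integral_unitInterval_deriv_eq_sub (z₀ := (1 : ℂ)) (z₁ := a)
    (f := fun w ↦ w ^ (b + 1)) (f' := fun w ↦ (b + 1) * w ^ b)
    (continuousOn_const.mul (by simpa only [real_smul] using
      continuousOn_one_add_ofReal_mul_cpow ha b)) fun s hs ↦ by
        have hslit : 1 + s • a ∈ slitPlane := by
          rw [real_smul]
          exact .inl (re_one_add_ofReal_mul_pos ha hs)
        simpa using (hasDerivAt_id _).cpow_const (c := b + 1) hslit
  simpa using h

/-- The substitution `t = s / (1 - a + s * a)`, verified through the primitives of both sides. -/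
lemma integral_binomialKernel_add_inv (hβ : 0 < β) (ha : ‖a‖ < 1) :
    (∫ t in (0 : ℝ)..1, binomialKernel (β + 1) (t * a)) + 1 / β =
      ((β + 1) / β : ℝ) * ∫ s in (0 : ℝ)..1, (1 + s * (a / (1 - a))) ^ (β : ℂ) := by
  have hβc : (β : ℂ) ≠ 0 := ofReal_ne_zero.2 hβ.ne'
  rcases eq_or_ne a 0 with rfl | ha0
  · simp; field_simp
  have hne := one_sub_ne_zero_of_norm_lt_one ha
  have hleft : a * (β * ∫ t in (0 : ℝ)..1, binomialKernel (β + 1) (t * a)) =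
      binomialKernel β a - 1 := by
    rw [← intervalIntegral.integral_const_mul, ← binomialKernel_zero_right β]
    exact integral_deriv_ofReal_mul (continuousOn_const.mul (continuousOn_binomialKernel _))
      (fun w hw ↦ hasDerivAt_binomialKernel β (mem_ball_zero_iff.1 hw)) ha
  have hright : a / (1 - a) * ((β + 1) * ∫ s in (0 : ℝ)..1, (1 + s * (a / (1 - a))) ^ (β : ℂ)) =
      binomialKernel β a / (1 - a) - 1 := by
    rw [← intervalIntegral.integral_const_mul,
      mul_integral_one_add_ofReal_mul_cpow (neg_one_lt_re_div_one_sub ha)]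
    have hy : 1 + a / (1 - a) = (1 - a)⁻¹ := by field_simp; ring
    rw [hy, inv_cpow _ _ (mem_slitPlane_iff_arg.1 (one_sub_mem_slitPlane_s3 ha)).1, ← cpow_neg,
      div_eq_mul_inv, ← binomialKernel_one, binomialKernel_mul _ _ ha]
    simp [binomialKernel]
  rw [eq_sub_iff_add_eq] at hleft
  rw [← hleft] at hright
  push_cast
  field_simp at hright ⊢
  refine mul_left_cancel₀ ha0 ?_
  linear_combination -hright

lemma re_mul_integral_binomialKernel_nonneg (hβ : 0 < β)
    (hc : ∀ w : ℂ, 0 < w.re → 0 ≤ (c * w ^ (β : ℂ)).re) (ha : ‖a‖ < 1) :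
    0 ≤ (c * ((∫ t in (0 : ℝ)..1, binomialKernel (β + 1) (t * a)) + 1 / β)).re := by
  have hy := neg_one_lt_re_div_one_sub ha
  rw [integral_binomialKernel_add_inv hβ ha, mul_left_comm, re_ofReal_mul,
    ← intervalIntegral.integral_const_mul]
  have hint : IntervalIntegrable (fun s : ℝ ↦ c * (1 + s * (a / (1 - a))) ^ (β : ℂ)) volume 0 1 :=
    (continuousOn_const.mul
      (continuousOn_one_add_ofReal_mul_cpow hy β)).intervalIntegrable_of_Icc zero_le_one
  have hre := reCLM.intervalIntegral_comp_comm hint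
  simp only [reCLM_apply] at hre
  rw [← hre]
  exact mul_nonneg (by positivity) (intervalIntegral.integral_nonneg zero_le_one fun s hs ↦
    hc _ (re_one_add_ofReal_mul_pos hy hs))

lemma integrable_uncurry_binomialKernel_mul {ν : Measure ℂ} [IsFiniteMeasure ν] {p : ℝ}
    (hp : 0 ≤ p) (hν : ∀ᵐ w ∂ν, ‖w‖ ≤ 1) (hz : ‖z‖ < 1) :
    Integrable (Function.uncurry fun (t : ℝ) (w : ℂ) ↦ binomialKernel p (t * (w * z)))
      ((volume.restrict (Ioc 0 1)).prod ν) := by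
  refine .of_bound ((measurable_binomialKernel p).comp (by fun_prop)).aestronglyMeasurable
    ((1 - ‖z‖) ^ (-p)) ?_
  filter_upwards [Measure.quasiMeasurePreserving_fst.ae (ae_restrict_mem measurableSet_Ioc),
    Measure.quasiMeasurePreserving_snd.ae hν] with y ht hw
  refine norm_binomialKernel_le hp hz ((norm_ofReal_mul_le (Ioc_subset_Icc_self ht) _).trans ?_)
  rw [norm_mul]
  exact mul_le_of_le_one_left (norm_nonneg z) hw

lemma IsBinomialMixture.integrableOn_comp_ofReal_mul {p : ℝ} (hF : IsBinomialMixture p F)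
    (hp : 0 ≤ p) (hz : ‖z‖ < 1) : IntegrableOn (fun t : ℝ ↦ F (t * z)) (Ioc 0 1) := by
  obtain ⟨ν, _, hν, hF⟩ := hF
  refine (integrable_uncurry_binomialKernel_mul hp hν hz).integral_prod_left.congr ?_
  filter_upwards [ae_restrict_mem measurableSet_Ioc] with t ht
  rw [hF _ (mem_ball_zero_iff.2 ((norm_ofReal_mul_le (Ioc_subset_Icc_self ht) z).trans_lt hz))]
  simp only [Function.uncurry, mul_left_comm]

lemma IsBinomialMixture.re_mul_integral_nonneg (hβ : 0 < β)
    (hc : ∀ w : ℂ, 0 < w.re → 0 ≤ (c * w ^ (β : ℂ)).re) (hF : IsBinomialMixture (β + 1) F)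
    (hz : ‖z‖ < 1) : 0 ≤ (c * ((∫ t in (0 : ℝ)..1, F (t * z)) + 1 / β)).re := by
  obtain ⟨ν, _, hν, hF⟩ := hF
  set J : ℂ → ℂ := fun w ↦ ∫ t in (0 : ℝ)..1, binomialKernel (β + 1) (t * (w * z)) with hJ
  have hint := integrable_uncurry_binomialKernel_mul (p := β + 1) (by positivity) hν hz
  have hJint : Integrable J ν := by
    simp only [hJ, intervalIntegral.integral_of_le (zero_le_one' ℝ)]
    exact hint.integral_prod_right
  have hswap : ∫ t in (0 : ℝ)..1, F (t * z) = ∫ w, J w ∂ν := by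
    simp only [hJ, intervalIntegral.integral_of_le (zero_le_one' ℝ)]
    refine (setIntegral_congr_fun measurableSet_Ioc fun t ht ↦ ?_).trans
      (integral_integral_swap hint)
    simp only [mul_left_comm (t : ℂ)]
    exact hF _ (mem_ball_zero_iff.2 ((norm_ofReal_mul_le (Ioc_subset_Icc_self ht) z).trans_lt hz))
  have hmix : c * ((∫ t in (0 : ℝ)..1, F (t * z)) + 1 / β) = ∫ w, c * (J w + 1 / β) ∂ν := by
    rw [integral_const_mul, integral_add hJint (integrable_const _), ← hswap, integral_const,
      probReal_univ, one_smul]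
  have hre := reCLM.integral_comp_comm ((hJint.add (integrable_const (1 / (β : ℂ)))).const_mul c)
  simp only [reCLM_apply, Pi.add_apply] at hre
  rw [hmix, ← hre]
  exact integral_nonneg_of_ae (hν.mono fun w hw ↦
    re_mul_integral_binomialKernel_nonneg hβ hc (norm_mul_lt_one hw hz))

lemma re_mul_integral_nonneg_of_tendsto (hβ : 0 < β)
    (hc : ∀ w : ℂ, 0 < w.re → 0 ≤ (c * w ^ (β : ℂ)).re) {F : ℕ → ℂ → ℂ}
    (hF : ∀ n, IsBinomialMixture (β + 1) (F n))
    (hlim : ∀ ζ ∈ ball 0 1, Tendsto (fun n ↦ F n ζ) atTop (𝓝 (Φ ζ))) (hz : ‖z‖ < 1) :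
    0 ≤ (c * ((∫ t in (0 : ℝ)..1, Φ (t * z)) + 1 / β)).re := by
  have hmem (t : ℝ) (ht : t ∈ Ioc 0 1) : ‖t * z‖ ≤ ‖z‖ :=
    norm_ofReal_mul_le (Ioc_subset_Icc_self ht) z
  have hball (t : ℝ) (ht : t ∈ Ioc 0 1) : (t * z : ℂ) ∈ ball 0 1 :=
    mem_ball_zero_iff.2 ((hmem t ht).trans_lt hz)
  have htend : Tendsto (fun n ↦ ∫ t in (0 : ℝ)..1, F n (t * z)) atTop
      (𝓝 (∫ t in (0 : ℝ)..1, Φ (t * z))) := by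
    refine intervalIntegral.tendsto_integral_filter_of_dominated_convergence
      (fun _ ↦ (1 - ‖z‖) ^ (-(β + 1))) (.of_forall fun n ↦ ?_) (.of_forall fun n ↦ ?_)
      (by simp) ?_
    · rw [uIoc_of_le zero_le_one]
      exact ((hF n).integrableOn_comp_ofReal_mul (by positivity) hz).aestronglyMeasurable
    · refine .of_forall fun t ht ↦ ?_
      rw [uIoc_of_le zero_le_one] at ht
      refine ((hF n).norm_le (by positivity) (hball t ht)).trans ?_
      refine Real.rpow_le_rpow_of_nonpos (sub_pos.2 hz) ?_ (by linarith)
      gcongr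
      exact hmem t ht
    · refine .of_forall fun t ht ↦ ?_
      rw [uIoc_of_le zero_le_one] at ht
      exact hlim _ (hball t ht)
  exact ge_of_tendsto' ((continuous_re.tendsto _).comp
    ((htend.add_const (1 / (β : ℂ))).const_mul c)) fun n ↦ (hF n).re_mul_integral_nonneg hβ hc hz

lemma re_mul_integral_nonneg (hβ : 0 < β)
    (hc : ∀ w : ℂ, 0 < w.re → 0 ≤ (c * w ^ (β : ℂ)).re)
    (hΦ : DifferentiableOn ℂ Φ (ball 0 1)) (hΦ0 : Φ 0 = 1) (hne : ∀ ζ ∈ ball 0 1, Φ ζ ≠ 0)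
    (hre : ∀ ζ ∈ ball 0 1, -((β + 1) / 2) ≤ (ζ * deriv Φ ζ / Φ ζ).re) (hz : ‖z‖ < 1) :
    0 ≤ (c * ((∫ t in (0 : ℝ)..1, Φ (t * z)) + 1 / β)).re := by
  obtain ⟨ρ, hzρ, hρ1⟩ := exists_between hz
  have hρ : 0 < ρ := (norm_nonneg z).trans_lt hzρ
  have hmaps : MapsTo (fun ζ : ℂ ↦ ρ * ζ) (ball 0 ρ⁻¹) (ball 0 1) := fun ζ hζ ↦ by
    rw [mem_ball_zero_iff] at hζ ⊢
    rw [norm_mul, norm_real, Real.norm_of_nonneg hρ.le]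
    rwa [← lt_inv_mul_iff₀ hρ, mul_one]
  have hR : 1 < ρ⁻¹ := (one_lt_inv₀ hρ).2 hρ1
  obtain ⟨F, hF, hlim⟩ := exists_tendsto_isBinomialMixture (p := β + 1)
    (Φ := fun ζ ↦ Φ (ρ * ζ)) (by positivity) hR
    (hΦ.comp (by fun_prop) hmaps) (by simpa) (fun ζ hζ ↦ hne _ (hmaps hζ)) fun ζ hζ ↦ by
      simp only [deriv_comp_mul_left, smul_eq_mul]
      convert hre _ (hmaps (sphere_subset_closedBall.trans (closedBall_subset_ball hR) hζ))
        using 2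
      ring
  have hzρ' : ‖z / ρ‖ < 1 := by
    rwa [norm_div, norm_real, Real.norm_of_nonneg hρ.le, div_lt_one hρ]
  have hscale (t : ℝ) : (ρ : ℂ) * (t * (z / ρ)) = t * z := by
    have := ofReal_ne_zero.2 hρ.ne'
    field_simp
  simpa only [hscale] using re_mul_integral_nonneg_of_tendsto hβ hc hF hlim hzρ'

end HalfPlane

lemma re_exp_mul_cpow_nonneg {β θ : ℝ} (hβ : 0 ≤ β) (hθ : |θ| + β * (Real.pi / 2) ≤ Real.pi / 2)
    {w : ℂ} (hw : 0 < w.re) : 0 ≤ (exp (θ * I) * w ^ (β : ℂ)).re := by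
  have hw0 : w ≠ 0 := by rintro rfl; simp at hw
  have harg : |arg w| ≤ Real.pi / 2 := abs_arg_le_pi_div_two_iff.2 hw.le
  have hsum : |θ + arg w * β| ≤ Real.pi / 2 := by
    refine (abs_add_le _ _).trans (le_trans ?_ hθ)
    rw [abs_mul, abs_of_nonneg hβ, mul_comm β]
    gcongr
  rw [cpow_def_of_ne_zero hw0, ← exp_add, exp_re]
  refine mul_nonneg (Real.exp_pos _).le (Real.cos_nonneg_of_mem_Icc ?_)
  simpa [log_im] using abs_le.1 hsum

lemma dslope_zero_eq_integral_deriv {f : ℂ → ℂ} (hf : DifferentiableOn ℂ f (ball 0 1)) {z : ℂ}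
    (hz : ‖z‖ < 1) : dslope f 0 z = ∫ t in (0 : ℝ)..1, deriv f (t * z) := by
  rcases eq_or_ne z 0 with rfl | hz0
  · simp
  rw [dslope_of_ne _ hz0, slope_def_field, sub_zero, div_eq_iff hz0, mul_comm]
  exact (integral_deriv_ofReal_mul (hf.deriv isOpen_ball).continuousOn
    (fun w hw ↦ (hf.differentiableAt (isOpen_ball.mem_nhds hw)).hasDerivAt) hz).symm

lemma re_pos_of_re_nonneg_of_re_pos {E : Type*} [NormedAddCommGroup E] [NormedSpace ℂ E] {U : Set E}
    (hU : IsOpen U) (hUc : IsPreconnected U) {g : E → ℂ} (hg : DifferentiableOn ℂ g U)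
    (hnonneg : ∀ z ∈ U, 0 ≤ (g z).re) {z₀ : E} (hz₀ : z₀ ∈ U) (hpos : 0 < (g z₀).re) {z : E}
    (hz : z ∈ U) : 0 < (g z).re := by
  refine (hnonneg z hz).lt_of_ne' fun hgz ↦ ?_
  have hmax : IsMaxOn (norm ∘ fun w ↦ exp (-g w)) U z := fun w hw ↦ by
    simpa [norm_exp, hgz] using hnonneg w hw
  have h := norm_eqOn_of_isPreconnected_of_isMaxOn hUc hU hg.neg.cexp hz hmax hz₀
  simp only [Function.comp_apply, Function.const_apply, norm_exp, Real.exp_eq_exp, Pi.neg_apply,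
    neg_re, hgz, neg_inj] at h
  exact hpos.ne' h

lemma re_exp_mul_dslope_pos {α θ : ℝ} (hα1 : α < 1 / 2) (hθ : |θ| = Real.pi * α)
    {f : ℂ → ℂ} (hf : IsConvexOfOrder α f) {z : ℂ} (hz : z ∈ unitDisk) :
    0 < (exp (θ * I) * (dslope f 0 z + 1 / (1 - 2 * α : ℝ))).re := by
  obtain ⟨hd, -, hf1, hre⟩ := hf
  have hβ : 0 < 1 - 2 * α := by linarith
  unfold unitDisk at hd hre hz
  refine re_pos_of_re_nonneg_of_re_pos isOpen_ball (convex_ball 0 1).isPreconnected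
    (g := fun z ↦ exp (θ * I) * (dslope f 0 z + 1 / (1 - 2 * α : ℝ)))
    ((((differentiableOn_dslope (ball_mem_nhds 0 one_pos)).2 hd).add_const _).const_mul _)
    (fun w hw ↦ ?_) (mem_ball_self one_pos) ?_ hz
  · rw [mem_ball_zero_iff] at hw
    simp only [dslope_zero_eq_integral_deriv hd hw]
    refine re_mul_integral_nonneg hβ
      (fun v ↦ re_exp_mul_cpow_nonneg hβ.le (by rw [hθ]; linarith))
      (hd.deriv isOpen_ball) hf1 (fun ζ hζ ↦ (hre ζ hζ).1) (fun ζ hζ ↦ ?_) hw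
    have h := (hre ζ hζ).2
    rw [add_re, one_re] at h
    linarith
  · have hcos : 0 < Real.cos θ := by
      rw [← Real.cos_abs]
      refine Real.cos_pos_of_mem_Ioo ⟨by linarith [abs_nonneg θ, Real.pi_pos], ?_⟩
      nlinarith [Real.pi_pos]
    have hreal : dslope f 0 0 + 1 / (1 - 2 * α : ℝ) = ((1 + 1 / (1 - 2 * α) : ℝ) : ℂ) := by
      rw [dslope_same, hf1]
      push_cast
      rfl
    simp only [hreal, re_mul_ofReal, exp_ofReal_mul_I_re]
    positivity

lemma abs_im_lt_cot_mul_re {θ : ℝ} (hθ0 : 0 < θ) (hθπ : θ < Real.pi) {w : ℂ}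
    (h : 0 < (exp (θ * I) * w).re) (h' : 0 < (exp ((-θ : ℝ) * I) * w).re) :
    |w.im| < Real.cot θ * w.re := by
  have hsin : 0 < Real.sin θ := Real.sin_pos_of_pos_of_lt_pi hθ0 hθπ
  simp only [mul_re, exp_ofReal_mul_I_re, exp_ofReal_mul_I_im, Real.cos_neg, Real.sin_neg] at h h'
  rw [Real.cot_eq_cos_div_sin, div_mul_eq_mul_div, lt_div_iff₀ hsin, ← abs_of_pos hsin, ← abs_mul,
    abs_lt]
  constructor <;> linarith

end

/-- for `0 < α < 1/2` and `f ∈ K(α)`, the values of `f(z)/z` lie in the sector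
`|v| < cot(πα)(u - 1/(2α-1))`. -/
theorem sector_of_convexOfOrder (α : ℝ) (hα0 : 0 < α) (hα1 : α < 1 / 2)
    (f : ℂ → ℂ) (hf : IsConvexOfOrder α f) :
    ∀ z ∈ unitDisk, z ≠ 0 →
      |(f z / z).im| < Real.cot (Real.pi * α) * ((f z / z).re - 1 / (2 * α - 1)) := by
  intro z hz hz0
  have hθ0 : 0 < Real.pi * α := mul_pos Real.pi_pos hα0
  have hθπ : Real.pi * α < Real.pi := mul_lt_of_lt_one_right Real.pi_pos (by linarith)
  have hdslope : dslope f 0 z = f z / z := by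
    rw [dslope_of_ne _ hz0, slope_def_field, hf.2.1, sub_zero, sub_zero]
  have h := abs_im_lt_cot_mul_re hθ0 hθπ (re_exp_mul_dslope_pos hα1 (abs_of_pos hθ0) hf hz)
    (re_exp_mul_dslope_pos hα1 (by rw [abs_neg, abs_of_pos hθ0]) hf hz)
  have hshift : (1 : ℂ) / (1 - 2 * α : ℝ) = ((-(1 / (2 * α - 1)) : ℝ) : ℂ) := by
    rw [← one_div_neg_eq_neg_one_div, neg_sub, Complex.ofReal_div, Complex.ofReal_one]
  rwa [hdslope, hshift, Complex.add_re, Complex.add_im, Complex.ofReal_re, Complex.ofReal_im,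
    add_zero, ← sub_eq_add_neg] at h
end

section
/- One has sup_{0<θ<π} Im(e^{−iθ}·(−log(1−e^{iθ}))) = π/2, where log denotes the principal branch; equivalently, the function v(θ) = ((π−θ)/2)·cos θ + sin θ·log(2 sin(θ/2)) satisfies v(θ) ≤ π/2 for all 0 < θ < π and v(θ) → π/2 as θ → 0⁺. -/
/-!
Write `s = sin (θ/2)` and `c = cos (θ/2)`. Factoring `1 - e^{iθ} = 2 s e^{i(θ-π)/2}` turns the
imaginary part into `v θ = (π - θ)/2 * (1 - 2 s²) + c * (2 s * log (2 s))`, which extends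
continuously to `θ = 0` with value `π/2`. The value `π/2` is never exceeded, because `s < θ/2`,
`c ≤ (π - θ)/2` and `log (2 s) ≤ 2 s - 1` give `π/2 - v θ > s * (1 + 2 c (1 - s)) > 0`.
-/

section

open Real

theorem one_sub_exp_mul_I (z : ℂ) :
    1 - Complex.exp (z * Complex.I) =
      2 * Complex.sin (z / 2) * Complex.exp ((z - π) / 2 * Complex.I) := by
  have hquarter : Complex.exp ((z - π) / 2 * Complex.I) =
      Complex.exp (z / 2 * Complex.I) * -Complex.I := by
    rw [← Complex.exp_neg_pi_div_two_mul_I, ← Complex.exp_add]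
    ring_nf
  have hcancel : Complex.exp (-(z / 2) * Complex.I) * Complex.exp (z / 2 * Complex.I) = 1 := by
    rw [neg_mul, ← Complex.exp_add, neg_add_cancel, Complex.exp_zero]
  have hsquare : Complex.exp (z * Complex.I) = Complex.exp (z / 2 * Complex.I) ^ 2 := by
    rw [← Complex.exp_nat_mul]
    ring_nf
  rw [Complex.two_sin, hquarter, hsquare]
  linear_combination -hcancel + (Complex.exp (-(z / 2) * Complex.I) *
    Complex.exp (z / 2 * Complex.I) - Complex.exp (z / 2 * Complex.I) ^ 2) * Complex.I_sq

theorem log_one_sub_exp_mul_I {θ : ℝ} (hθ : θ ∈ Set.Ioo 0 (2 * π)) :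
    Complex.log (1 - Complex.exp (θ * Complex.I)) =
      (log (2 * sin (θ / 2)) : ℝ) + ((θ - π) / 2 : ℝ) * Complex.I := by
  obtain ⟨hθ_pos, hθ_lt⟩ := hθ
  have hsin : 0 < 2 * sin (θ / 2) :=
    mul_pos two_pos (sin_pos_of_pos_of_lt_pi (by linarith) (by linarith))
  have hpolar : 1 - Complex.exp (θ * Complex.I) =
      (2 * sin (θ / 2) : ℝ) * Complex.exp (((θ - π) / 2 : ℝ) * Complex.I) := by
    rw [one_sub_exp_mul_I]
    push_cast
    rfl
  have harg : ((θ - π) / 2 : ℝ) ∈ Set.Ioc (-π) π := ⟨by linarith, by linarith⟩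
  rw [hpolar, Complex.log_ofReal_mul hsin (Complex.exp_ne_zero _), Complex.log_exp] <;>
    simp [harg.1, harg.2]

/-- The boundary function `v(θ) = Im (e^{-iθ} k_{1/2}(e^{iθ}))` of the paper in closed form; the
two agree on `(0, 2π)`. At `θ = 0` the convention `log 0 = 0` gives the continuous extension. -/
noncomputable def khalfBoundary (θ : ℝ) : ℝ :=
  (π - θ) / 2 * cos θ + sin θ * log (2 * sin (θ / 2))

theorem im_exp_mul_neg_log_one_sub_exp {θ : ℝ} (hθ : θ ∈ Set.Ioo 0 (2 * π)) :
    (Complex.exp (-(θ : ℂ) * Complex.I) *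
      (-Complex.log (1 - Complex.exp ((θ : ℂ) * Complex.I)))).im = khalfBoundary θ := by
  have hre : (Complex.exp (-(θ : ℂ) * Complex.I)).re = cos θ := by
    rw [← Complex.ofReal_neg, Complex.exp_ofReal_mul_I_re, cos_neg]
  have him : (Complex.exp (-(θ : ℂ) * Complex.I)).im = -sin θ := by
    rw [← Complex.ofReal_neg, Complex.exp_ofReal_mul_I_im, sin_neg]
  have hlog_re : (Complex.log (1 - Complex.exp (θ * Complex.I))).re = log (2 * sin (θ / 2)) := by
    simp [log_one_sub_exp_mul_I hθ]
  have hlog_im : (Complex.log (1 - Complex.exp (θ * Complex.I))).im = (θ - π) / 2 := by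
    simp [log_one_sub_exp_mul_I hθ]
  rw [Complex.mul_im, hre, him, Complex.neg_re, Complex.neg_im, hlog_re, hlog_im, khalfBoundary]
  ring

theorem khalfBoundary_eq_half_angle (θ : ℝ) :
    khalfBoundary θ = (π - θ) / 2 * (1 - 2 * sin (θ / 2) ^ 2) +
      cos (θ / 2) * (2 * sin (θ / 2) * log (2 * sin (θ / 2))) := by
  have hcos : cos θ = 1 - 2 * sin (θ / 2) ^ 2 := by
    rw [← cos_two_mul_eq_one_sub, mul_div_cancel₀ θ two_ne_zero]
  have hsin : sin θ = 2 * sin (θ / 2) * cos (θ / 2) := by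
    rw [← sin_two_mul, mul_div_cancel₀ θ two_ne_zero]
  rw [khalfBoundary, hcos, hsin]
  ring

theorem khalfBoundary_zero : khalfBoundary 0 = π / 2 := by
  simp [khalfBoundary]

theorem continuous_khalfBoundary : Continuous khalfBoundary := by
  have hxlogx : Continuous fun θ : ℝ ↦ 2 * sin (θ / 2) * log (2 * sin (θ / 2)) :=
    continuous_mul_log.comp' (by fun_prop)
  rw [funext khalfBoundary_eq_half_angle]
  exact .add (by fun_prop) (.mul (by fun_prop) hxlogx)

theorem khalfBoundary_lt_pi_div_two {θ : ℝ} (hθ : θ ∈ Set.Ioc 0 π) :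
    khalfBoundary θ < π / 2 := by
  obtain ⟨hθ_pos, hθ_le⟩ := hθ
  have hsin_lt : sin (θ / 2) < θ / 2 := sin_lt (by linarith)
  have hcos_le : cos (θ / 2) ≤ (π - θ) / 2 := by
    calc cos (θ / 2) = sin ((π - θ) / 2) := by rw [← sin_pi_div_two_sub]; ring_nf
      _ ≤ (π - θ) / 2 := sin_le (by linarith)
  have hsin_pos : 0 < sin (θ / 2) := sin_pos_of_pos_of_lt_pi (by linarith) (by linarith)
  have hcos_nonneg : 0 ≤ cos (θ / 2) := cos_nonneg_of_mem_Icc ⟨by linarith, by linarith⟩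
  have hsin_le_one : sin (θ / 2) ≤ 1 := sin_le_one _
  have hlog : log (2 * sin (θ / 2)) ≤ 2 * sin (θ / 2) - 1 :=
    log_le_sub_one_of_pos (by linarith)
  rw [khalfBoundary_eq_half_angle]
  generalize sin (θ / 2) = s at *
  generalize cos (θ / 2) = c at *
  have hgap : 0 < s * (1 + 2 * c * (1 - s)) := by
    have : 0 ≤ 1 - s := sub_nonneg.2 hsin_le_one
    positivity
  calc (π - θ) / 2 * (1 - 2 * s ^ 2) + c * (2 * s * log (2 * s))
      = π / 2 - θ / 2 - 2 * s ^ 2 * ((π - θ) / 2) + c * (2 * s * log (2 * s)) := by ring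
    _ ≤ π / 2 - s - 2 * s ^ 2 * c + c * (2 * s * (2 * s - 1)) := by gcongr
    _ = π / 2 - s * (1 + 2 * c * (1 - s)) := by ring
    _ < π / 2 := sub_lt_self _ hgap

theorem tendsto_khalfBoundary_nhdsGT_zero :
    Filter.Tendsto khalfBoundary (nhdsWithin 0 (Set.Ioi 0)) (nhds (π / 2)) :=
  khalfBoundary_zero ▸ continuous_khalfBoundary.continuousWithinAt.tendsto

theorem isLUB_khalfBoundary_image_Ioo : IsLUB (khalfBoundary '' Set.Ioo 0 π) (π / 2) := by
  refine isLUB_of_mem_closure ?_ (mem_closure_of_tendsto tendsto_khalfBoundary_nhdsGT_zero ?_)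
  · rintro _ ⟨θ, hθ, rfl⟩
    exact (khalfBoundary_lt_pi_div_two (Set.Ioo_subset_Ioc_self hθ)).le
  · filter_upwards [Ioo_mem_nhdsGT pi_pos] with θ hθ
    exact Set.mem_image_of_mem _ hθ

end

/-- `sup_{0<θ<π} Im(e^{-iθ}(-log(1-e^{iθ}))) = π/2`; equivalently the function
`v(θ) = ((π-θ)/2)cos θ + sin θ log(2 sin(θ/2))` is `≤ π/2` on `(0,π)` and tends to `π/2`
as `θ → 0⁺`. -/
theorem sup_im_khalf_boundary :
    sSup {y : ℝ | ∃ θ ∈ Set.Ioo (0 : ℝ) Real.pi,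
        y = (Complex.exp (-(θ : ℂ) * Complex.I) *
          (-Complex.log (1 - Complex.exp ((θ : ℂ) * Complex.I)))).im} = Real.pi / 2 ∧
    (∀ θ ∈ Set.Ioo (0 : ℝ) Real.pi,
      (Real.pi - θ) / 2 * Real.cos θ + Real.sin θ * Real.log (2 * Real.sin (θ / 2))
        ≤ Real.pi / 2) ∧
    Filter.Tendsto
      (fun θ : ℝ => (Real.pi - θ) / 2 * Real.cos θ + Real.sin θ * Real.log (2 * Real.sin (θ / 2)))
      (nhdsWithin 0 (Set.Ioi 0)) (nhds (Real.pi / 2)) := by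
  refine ⟨?_, fun θ hθ ↦ (khalfBoundary_lt_pi_div_two (Set.Ioo_subset_Ioc_self hθ)).le,
    tendsto_khalfBoundary_nhdsGT_zero⟩
  have hsub : Set.Ioo 0 Real.pi ⊆ Set.Ioo 0 (2 * Real.pi) :=
    Set.Ioo_subset_Ioo_right (by linarith [Real.pi_pos])
  have himage : {y : ℝ | ∃ θ ∈ Set.Ioo (0 : ℝ) Real.pi,
      y = (Complex.exp (-(θ : ℂ) * Complex.I) *
        (-Complex.log (1 - Complex.exp ((θ : ℂ) * Complex.I)))).im} =
      khalfBoundary '' Set.Ioo 0 Real.pi := by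
    ext y
    refine exists_congr fun θ ↦ and_congr_right fun hθ ↦ ?_
    rw [im_exp_mul_neg_log_one_sub_exp (hsub hθ), eq_comm]
  rw [himage]
  exact isLUB_khalfBoundary_image_Ioo.csSup_eq ((Set.nonempty_Ioo.2 Real.pi_pos).image _)
end
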